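/- arXiv:2009.09852 — 5 statements merged into one kernel-verified Lean document; each statement's English description precedes it below -/
import Mathlib

section
/- Let (X, Y) be a pair of real-valued random variables defined on a probability space, i.e., a probability measure μ on ℝ², with marginal cumulative distribution functions F_X and F_Y, and let Q_X(u) = inf{x ∈ ℝ : F_X(x) ≥ u} and Q_Y(u) = inf{y ∈ ℝ : F_Y(y) ≥ u} denote the corresponding quantile (generalized inverse) functions. Suppose c : ℝ × ℝ → ℝ is measurable and satisfies the Monge condition, i.e., c(x', y') + c(x, y) ≤ c(x, y') + c(x', y) for all x ≤ x' and y ≤ y'. If c(X, Y) is integrable with respect to μ and the function u ↦ c(Q_X(u), Q_Y(u)) is integrable on (0,1) with respect to Lebesgue measure, then ∫₀¹ c(Q_X(u), Q_Y(u)) du ≤ E[c(X, Y)]. -/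
open MeasureTheory Set

/-!
The proof is Kantorovich duality along the comonotonic curve `u ↦ (QX u, QY u)`, `0 < u < 1`.

*Potentials.* Along a monotone curve `u ↦ (x u, y u)` the Monge condition yields `φ` with
`φ t - φ s ≤ c (x t, y s) - c (x s, y s)` for all `s, t` (`exists_potential`): on finitely many
parameters `φ` is built by summing increments from left to right, and Tychonov's theorem passes to
all parameters. With `ψ t = c (x t, y t) - φ t` this says `φ s + ψ t ≤ c (x s, y t)`, with equality
for `s = t`. The function `u ↦ φ u - c (x u, y u₀)` is monotone before `u₀` and antitone after it,
so `φ` is measurable although `c` need not be continuous. Finally `φ u` depends only on `x u` and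
`ψ u` only on `y u`, so both descend to functions of the two coordinates.

*Integration.* Neither potential need be integrable on its own. Truncating both to `[-n, n]` gives
integrals that depend on the marginals only, and `|φₙ + ψₙ| ≤ |φ + ψ|` with the same sign, so
dominated convergence applies under both couplings (`integral_add_le_of_marginals`).
-/

/-! ### Potentials along a monotone curve -/

/-- On finitely many parameters, a potential is obtained by adding the parameters in increasing
order, each time with the increment from the previous one. -/
lemma exists_potential_finset {ι : Type*} [LinearOrder ι] {c : ℝ × ℝ → ℝ}
    (hMonge : ∀ x x' y y' : ℝ, x ≤ x' → y ≤ y' →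
      c (x', y') + c (x, y) ≤ c (x, y') + c (x', y))
    {x y : ι → ℝ} (hx : Monotone x) (hy : Monotone y) (S : Finset ι) :
    ∃ φ : ι → ℝ, ∀ s ∈ S, ∀ t ∈ S, φ t - φ s ≤ c (x t, y s) - c (x s, y s) := by
  induction S using Finset.induction_on_max with
  | empty => exact ⟨0, by simp⟩
  | insert a S hlt ih =>
    obtain ⟨φ, hφ⟩ := ih
    rcases S.eq_empty_or_nonempty with rfl | hne
    · exact ⟨0, by simp⟩
    set m := S.max' hne with hm
    have hmS : m ∈ S := S.max'_mem hne
    have hma : m < a := hlt m hmS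
    have haS : a ∉ S := fun h => lt_irrefl _ (hlt a h)
    refine ⟨Function.update φ a (φ m + (c (x a, y m) - c (x m, y m))), ?_⟩
    intro s hs t ht
    rw [Finset.mem_insert] at hs ht
    rcases hs with rfl | hs <;> rcases ht with rfl | ht
    · simp
    · have hta : t ≠ s := fun h => haS (h ▸ ht)
      rw [Function.update_self, Function.update_of_ne hta]
      have h1 := hφ m hmS t ht
      have h2 := hMonge (x t) (x s) (y m) (y s) (hx (hlt t ht).le) (hy hma.le)
      linarith
    · have hsa : s ≠ t := fun h => haS (h ▸ hs)
      rw [Function.update_self, Function.update_of_ne hsa]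
      have h1 := hφ s hs m hmS
      have h2 := hMonge (x m) (x t) (y s) (y m) (hx hma.le) (hy (S.le_max' s hs))
      linarith
    · have hsa : s ≠ a := fun h => haS (h ▸ hs)
      have hta : t ≠ a := fun h => haS (h ▸ ht)
      rw [Function.update_of_ne hsa, Function.update_of_ne hta]
      exact hφ s hs t ht

lemma exists_potential {ι : Type*} [LinearOrder ι] (o : ι) {c : ℝ × ℝ → ℝ}
    (hMonge : ∀ x x' y y' : ℝ, x ≤ x' → y ≤ y' →
      c (x', y') + c (x, y) ≤ c (x, y') + c (x', y))
    {x y : ι → ℝ} (hx : Monotone x) (hy : Monotone y) :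
    ∃ φ : ι → ℝ, ∀ s t, φ t - φ s ≤ c (x t, y s) - c (x s, y s) := by
  classical
  set w : ι → ι → ℝ := fun s t => c (x t, y s) - c (x s, y s) with hw
  -- Normalising `φ o = 0` confines `φ t` to the compact interval `[-w t o, w o t]`.
  have hK : IsCompact (univ.pi fun t => uIcc (-w t o) (w o t)) :=
    isCompact_univ_pi fun t => isCompact_uIcc
  obtain ⟨φ, -, hφ⟩ := hK.inter_iInter_nonempty
    (fun p : ι × ι => {φ : ι → ℝ | φ p.2 - φ p.1 ≤ w p.1 p.2})
    (fun p => isClosed_le (by fun_prop) continuous_const) (by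
      intro P
      set S : Finset ι := insert o (P.image Prod.fst ∪ P.image Prod.snd) with hS
      have ho : o ∈ S := by simp [hS]
      obtain ⟨φ, hφ⟩ := exists_potential_finset hMonge hx hy S
      refine ⟨fun t => if t ∈ S then φ t - φ o else w o t, ?_, ?_⟩
      · intro t _
        by_cases ht : t ∈ S
        · simp only [ht, if_true]
          have h1 := hφ o ho t ht
          have h2 := hφ t ht o ho
          exact Icc_subset_uIcc ⟨by simp only [hw]; linarith, h1⟩
        · simp only [ht, if_false]
          exact right_mem_uIcc
      · simp only [mem_iInter, mem_ofPred_eq]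
        intro p hp
        have h1 : p.1 ∈ S := by
          simp only [hS, Finset.mem_insert, Finset.mem_union]
          exact Or.inr (Or.inl (Finset.mem_image_of_mem _ hp))
        have h2 : p.2 ∈ S := by
          simp only [hS, Finset.mem_insert, Finset.mem_union]
          exact Or.inr (Or.inr (Finset.mem_image_of_mem _ hp))
        have h3 := hφ p.1 h1 p.2 h2
        simp only [h1, h2, if_true, hw]
        linarith)
  rw [mem_iInter] at hφ
  exact ⟨φ, fun s t => hφ (s, t)⟩

/-- After subtracting the section `c (·, y o)`, a potential is monotone up to `o` and antitone
from `o` on; hence it is measurable. -/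
lemma measurable_potential {ι : Type*} [LinearOrder ι] [TopologicalSpace ι] [OrderTopology ι]
    [SecondCountableTopology ι] [MeasurableSpace ι] [BorelSpace ι] (o : ι) {c : ℝ × ℝ → ℝ}
    (hc : Measurable c)
    (hMonge : ∀ x x' y y' : ℝ, x ≤ x' → y ≤ y' →
      c (x', y') + c (x, y) ≤ c (x, y') + c (x', y))
    {x y : ι → ℝ} (hx : Monotone x) (hy : Monotone y) {φ : ι → ℝ}
    (hφ : ∀ s t, φ t - φ s ≤ c (x t, y s) - c (x s, y s)) : Measurable φ := by
  set h : ι → ℝ := fun u => φ u - c (x u, y o) with hh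
  have h1 : Monotone fun u => h (min u o) := by
    intro s t hst
    have hst' : min s o ≤ min t o := min_le_min_right o hst
    have e1 := hφ (min t o) (min s o)
    have e2 := hMonge _ _ _ _ (hx hst') (hy (min_le_right t o))
    simp only [hh]
    linarith
  have h2 : Antitone fun u => h (max u o) := by
    intro s t hst
    have hst' : max s o ≤ max t o := max_le_max_right o hst
    have e1 := hφ (max s o) (max t o)
    have e2 := hMonge _ _ _ _ (hx hst') (hy (le_max_right s o))
    simp only [hh]
    linarith
  have h3 : φ = fun u => h (min u o) + h (max u o) - h o + c (x u, y o) := by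
    funext u
    rcases le_total u o with hu | hu <;> simp [hh, hu]
  rw [h3]
  exact ((h1.measurable.add h2.measurable).sub_const _).add
    (hc.comp (hx.measurable.prodMk measurable_const))

/-! ### Quantile functions -/

/-- Lebesgue measure on the open unit interval, as a measure on the subtype. -/
noncomputable def uniformIoo : Measure (Ioo (0 : ℝ) 1) :=
  (volume : Measure ℝ).comap Subtype.val

section Quantile

variable {m : Measure ℝ} [IsProbabilityMeasure m] {q : Ioo (0 : ℝ) 1 → ℝ}

lemma quantile_le_iff (hq : ∀ u : Ioo (0 : ℝ) 1, q u = sInf {x : ℝ | (u : ℝ) ≤ m.real (Iic x)})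
    (u : Ioo (0 : ℝ) 1) (x : ℝ) : q u ≤ x ↔ (u : ℝ) ≤ ProbabilityTheory.cdf m x := by
  set F := ProbabilityTheory.cdf m with hF
  have hqF : q u = sInf {x : ℝ | (u : ℝ) ≤ F x} := by
    rw [hq u]; simp only [hF, ProbabilityTheory.cdf_eq_real]
  have hne : {x : ℝ | (u : ℝ) ≤ F x}.Nonempty :=
    ((ProbabilityTheory.tendsto_cdf_atTop m).eventually_const_le u.2.2).exists
  have hbdd : BddBelow {x : ℝ | (u : ℝ) ≤ F x} := by
    obtain ⟨z, hz⟩ :=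
      ((ProbabilityTheory.tendsto_cdf_atBot m).eventually_lt_const u.2.1).exists
    refine ⟨z, fun y hy => le_of_not_gt fun hyz => ?_⟩
    exact absurd (hy.trans (F.mono hyz.le)) (not_le.2 hz)
  constructor
  · intro h
    refine le_trans ?_ (F.mono h)
    -- The infimum is attained, by right continuity of the distribution function.
    have ht : Filter.Tendsto F (nhdsWithin (q u) (Ioi (q u))) (nhds (F (q u))) :=
      ((F.right_continuous (q u)).mono Ioi_subset_Ici_self).tendsto
    refine ge_of_tendsto ht ?_
    filter_upwards [self_mem_nhdsWithin] with z hz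
    obtain ⟨y, hy, hyz⟩ := exists_lt_of_csInf_lt hne (hqF ▸ hz : sInf _ < z)
    exact le_trans hy (F.mono hyz.le)
  · intro h
    rw [hqF]
    exact csInf_le hbdd h

lemma monotone_quantile
    (hq : ∀ u : Ioo (0 : ℝ) 1, q u = sInf {x : ℝ | (u : ℝ) ≤ m.real (Iic x)}) :
    Monotone q := by
  intro s t hst
  rw [quantile_le_iff hq]
  exact le_trans (show (s : ℝ) ≤ t from hst) ((quantile_le_iff hq t _).1 le_rfl)

lemma isProbabilityMeasure_uniformIoo : IsProbabilityMeasure uniformIoo :=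
  ⟨by rw [uniformIoo, comap_subtype_coe_apply measurableSet_Ioo, Subtype.coe_image_univ,
    Real.volume_Ioo]; simp⟩

lemma map_quantile
    (hq : ∀ u : Ioo (0 : ℝ) 1, q u = sInf {x : ℝ | (u : ℝ) ≤ m.real (Iic x)}) :
    Measure.map q uniformIoo = m := by
  have := isProbabilityMeasure_uniformIoo
  have hqm : Measurable q := (monotone_quantile hq).measurable
  have := Measure.isProbabilityMeasure_map (μ := uniformIoo)
    hqm.aemeasurable
  refine Measure.ext_of_Iic _ _ fun x => ?_
  rw [Measure.map_apply hqm measurableSet_Iic, ← ProbabilityTheory.ofReal_cdf m x,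
    uniformIoo, comap_subtype_coe_apply measurableSet_Ioo]
  have h0 := ProbabilityTheory.cdf_nonneg m x
  have h1 := ProbabilityTheory.cdf_le_one m x
  set a := ProbabilityTheory.cdf m x
  have hset : (Subtype.val '' (q ⁻¹' Iic x) : Set ℝ) = Ioo 0 1 ∩ Iic a := by
    ext u
    constructor
    · rintro ⟨v, hv, rfl⟩
      exact ⟨v.2, (quantile_le_iff hq v x).1 hv⟩
    · rintro ⟨hu, hua⟩
      exact ⟨⟨u, hu⟩, (quantile_le_iff hq ⟨u, hu⟩ x).2 hua, rfl⟩
  rw [hset]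
  apply le_antisymm
  · refine (measure_mono (t := Ioc 0 a) fun u hu => ⟨hu.1.1, hu.2⟩).trans ?_
    simp
  · refine le_trans ?_ (measure_mono (s := Ioo 0 a) fun u hu =>
      ⟨⟨hu.1, hu.2.trans_le h1⟩, hu.2.le⟩)
    simp

/-- A measurable left inverse of the quantile function, up to parameters with the same quantile.
It is the midpoint of the jump of the distribution function, which, unlike the distribution
function itself, lies in `(0, 1)` on the range of the quantile function; where it does not, the
value `1 / 2` is used. -/
lemma exists_rank
    (hq : ∀ u : Ioo (0 : ℝ) 1, q u = sInf {x : ℝ | (u : ℝ) ≤ m.real (Iic x)}) :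
    ∃ r : ℝ → Ioo (0 : ℝ) 1, Measurable r ∧ ∀ u, q (r (q u)) = q u := by
  set F := ProbabilityTheory.cdf m with hF
  set ρ : ℝ → ℝ := fun x => (Function.leftLim F x + F x) / 2 with hρ
  have hmono : Monotone ρ := fun x y hxy => by
    have h1 := F.mono.leftLim hxy
    have h2 := F.mono hxy
    simp only [hρ]
    linarith
  have hρm : Measurable ρ := hmono.measurable
  have hmem : ∀ x, (if ρ x ∈ Ioo (0 : ℝ) 1 then ρ x else 1 / 2) ∈ Ioo (0 : ℝ) 1 := by
    intro x
    split_ifs with h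
    · exact h
    · norm_num
  refine ⟨fun x => ⟨_, hmem x⟩, Measurable.subtype_mk
    (Measurable.ite (hρm measurableSet_Ioo) hρm measurable_const), fun u => ?_⟩
  set x := q u with hxu
  have hLF : Function.leftLim F x ≤ F x := F.mono.leftLim_le le_rfl
  have hL0 : 0 ≤ Function.leftLim F x :=
    (ProbabilityTheory.cdf_nonneg m (x - 1)).trans (F.mono.le_leftLim (by linarith))
  have huF : (u : ℝ) ≤ F x := (quantile_le_iff hq u x).1 le_rfl
  have hLu : Function.leftLim F x ≤ u := by
    refine le_of_tendsto (F.mono.tendsto_leftLim x) ?_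
    filter_upwards [self_mem_nhdsWithin] with z hz
    by_contra! hcon
    exact absurd ((quantile_le_iff hq u z).2 hcon.le) (not_le.2 hz)
  have hF1 : F x ≤ 1 := ProbabilityTheory.cdf_le_one m x
  have hu := u.2
  have hρx : ρ x ∈ Ioo (0 : ℝ) 1 := by
    simp only [hρ]
    constructor <;> linarith [hu.1, hu.2]
  have hr : (⟨_, hmem x⟩ : Ioo (0 : ℝ) 1) = ⟨ρ x, hρx⟩ := Subtype.ext (if_pos hρx)
  show q ⟨_, hmem x⟩ = x
  rw [hr]
  apply le_antisymm
  · rw [quantile_le_iff hq]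
    show (Function.leftLim F x + F x) / 2 ≤ F x
    linarith
  · by_contra! hcon
    have h1 : (Function.leftLim F x + F x) / 2 ≤ F (q ⟨ρ x, hρx⟩) :=
      (quantile_le_iff hq ⟨ρ x, hρx⟩ _).1 le_rfl
    have h2 := F.mono.le_leftLim hcon
    have h3 : (u : ℝ) ≤ F (q ⟨ρ x, hρx⟩) := by linarith
    exact absurd ((quantile_le_iff hq u _).2 h3) (not_le.2 hcon)

end Quantile

/-! ### Truncation of the potentials -/

/-- Truncation of a real number to the interval `[-n, n]`. -/
noncomputable def trunc (n : ℕ) (a : ℝ) : ℝ := max (-(n : ℝ)) (min n a)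

lemma measurable_trunc (n : ℕ) : Measurable (trunc n) :=
  measurable_const.max (measurable_const.min measurable_id)

lemma abs_trunc_le (n : ℕ) (a : ℝ) : |trunc n a| ≤ n := by
  have hn : (0 : ℝ) ≤ n := n.cast_nonneg
  rw [abs_le]
  exact ⟨le_max_left _ _, max_le (by linarith) (min_le_left _ _)⟩

lemma tendsto_trunc (a : ℝ) : Filter.Tendsto (fun n => trunc n a) Filter.atTop (nhds a) := by
  obtain ⟨N, hN⟩ := exists_nat_ge |a|
  refine tendsto_const_nhds.congr' ?_
  filter_upwards [Filter.eventually_ge_atTop N] with n hn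
  have h : |a| ≤ n := hN.trans (by exact_mod_cast hn)
  rw [abs_le] at h
  rw [trunc, min_eq_right h.2, max_eq_right h.1]

lemma trunc_add_le (n : ℕ) (a b : ℝ) : trunc n a + trunc n b ≤ max (a + b) 0 := by
  have hn : (0 : ℝ) ≤ n := n.cast_nonneg
  unfold trunc
  grind

lemma le_trunc_add (n : ℕ) (a b : ℝ) : min (a + b) 0 ≤ trunc n a + trunc n b := by
  have hn : (0 : ℝ) ≤ n := n.cast_nonneg
  unfold trunc
  grind

lemma integrable_trunc {Ω : Type*} [MeasurableSpace Ω] (γ : Measure Ω) [IsProbabilityMeasure γ]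
    {Z : Ω → ℝ} (hZ : Measurable Z) {h : ℝ → ℝ} (hh : Measurable h) (n : ℕ) :
    Integrable (fun ω => trunc n (h (Z ω))) γ :=
  Integrable.of_bound (((measurable_trunc n).comp (hh.comp hZ)).aestronglyMeasurable) n
    (Filter.Eventually.of_forall fun _ => abs_trunc_le n _)

/-- The integral of `f (X) + g (Y)` depends on the marginals only, even if `f (X)` and `g (Y)` are
not integrable separately; here in the one-sided form with an integrable majorant `C` for the
second coupling. -/
lemma integral_add_le_of_marginals {Ω Ω' : Type*} [MeasurableSpace Ω] [MeasurableSpace Ω']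
    (α : Measure Ω) (β : Measure Ω') [IsProbabilityMeasure α] [IsProbabilityMeasure β]
    {X Y : Ω → ℝ} {X' Y' : Ω' → ℝ} (hX : Measurable X) (hY : Measurable Y)
    (hX' : Measurable X') (hY' : Measurable Y')
    (hXX' : α.map X = β.map X') (hYY' : α.map Y = β.map Y')
    {f g : ℝ → ℝ} (hf : Measurable f) (hg : Measurable g) {C : Ω' → ℝ} (hC : Integrable C β)
    (hle : ∀ᵐ ω ∂β, f (X' ω) + g (Y' ω) ≤ C ω)
    (hint : Integrable (fun ω => f (X ω) + g (Y ω)) α) :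
    ∫ ω, f (X ω) + g (Y ω) ∂α ≤ ∫ ω, C ω ∂β := by
  have transfer : ∀ {Z : Ω → ℝ} {Z' : Ω' → ℝ} (_ : Measurable Z) (_ : Measurable Z')
      (_ : α.map Z = β.map Z') {h : ℝ → ℝ} (_ : Measurable h) (n : ℕ),
      ∫ ω, trunc n (h (Z ω)) ∂α = ∫ ω, trunc n (h (Z' ω)) ∂β := by
    intro Z Z' hZ hZ' hZZ' h hh n
    have hm : Measurable fun z => trunc n (h z) := (measurable_trunc n).comp hh
    rw [← integral_map (f := fun z => trunc n (h z)) hZ.aemeasurable hm.aestronglyMeasurable,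
      hZZ', integral_map hZ'.aemeasurable hm.aestronglyMeasurable]
  have limα : Filter.Tendsto (fun n : ℕ => ∫ ω, trunc n (f (X ω)) + trunc n (g (Y ω)) ∂α)
      Filter.atTop (nhds (∫ ω, f (X ω) + g (Y ω) ∂α)) := by
    refine tendsto_integral_of_dominated_convergence (fun ω => |f (X ω) + g (Y ω)|)
      (fun n => ((integrable_trunc α hX hf n).add (integrable_trunc α hY hg n)).aestronglyMeasurable) hint.abs
      (fun n => Filter.Eventually.of_forall fun ω => ?_)
      (Filter.Eventually.of_forall fun ω => (tendsto_trunc _).add (tendsto_trunc _))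
    have h1 := trunc_add_le n (f (X ω)) (g (Y ω))
    have h2 := le_trunc_add n (f (X ω)) (g (Y ω))
    rw [Real.norm_eq_abs]
    grind
  -- Under the second coupling only an upper bound is known, so the truncated sums are cut off
  -- from below at `min C 0`; the limit is still at most `C`.
  have hCm : Integrable (fun ω => min (C ω) 0) β := hC.inf (integrable_zero _ _ _)
  have intβ : ∀ n : ℕ, Integrable
      (fun ω => max (trunc n (f (X' ω)) + trunc n (g (Y' ω))) (min (C ω) 0)) β :=
    fun n => ((integrable_trunc β hX' hf n).add (integrable_trunc β hY' hg n)).sup hCm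
  have limβ : Filter.Tendsto
      (fun n : ℕ => ∫ ω, max (trunc n (f (X' ω)) + trunc n (g (Y' ω))) (min (C ω) 0) ∂β)
      Filter.atTop (nhds (∫ ω, max (f (X' ω) + g (Y' ω)) (min (C ω) 0) ∂β)) := by
    refine tendsto_integral_of_dominated_convergence (fun ω => |C ω|)
      (fun n => (intβ n).aestronglyMeasurable) hC.abs (fun n => ?_)
      (Filter.Eventually.of_forall fun ω =>
        ((tendsto_trunc _).add (tendsto_trunc _)).max tendsto_const_nhds)
    filter_upwards [hle] with ω hω
    have h1 := trunc_add_le n (f (X' ω)) (g (Y' ω))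
    rw [Real.norm_eq_abs]
    grind
  have step : ∀ n : ℕ, ∫ ω, trunc n (f (X ω)) + trunc n (g (Y ω)) ∂α ≤
      ∫ ω, max (trunc n (f (X' ω)) + trunc n (g (Y' ω))) (min (C ω) 0) ∂β := by
    intro n
    rw [integral_add (integrable_trunc α hX hf n) (integrable_trunc α hY hg n), transfer hX hX' hXX' hf n,
      transfer hY hY' hYY' hg n, ← integral_add (integrable_trunc β hX' hf n) (integrable_trunc β hY' hg n)]
    exact integral_mono ((integrable_trunc β hX' hf n).add (integrable_trunc β hY' hg n)) (intβ n)
      fun ω => le_max_left _ _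
  refine (le_of_tendsto_of_tendsto' limα limβ step).trans ?_
  have hlim : Integrable (fun ω => max (f (X' ω) + g (Y' ω)) (min (C ω) 0)) β := by
    refine hC.abs.mono' ?_ ?_
    · exact ((hf.comp hX').add (hg.comp hY')).aestronglyMeasurable.sup hCm.aestronglyMeasurable
    · filter_upwards [hle] with ω hω
      rw [Real.norm_eq_abs]
      grind
  refine integral_mono_ae hlim hC ?_
  filter_upwards [hle] with ω hω
  exact max_le hω (min_le_left _ _)

/-- Rachev–Rüschendorf lower bound (comonotonic coupling): for a submodular cost `c`
(satisfying the Monge condition), the expectation of `c (X, Y)` under any joint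
distribution `μ` on `ℝ²` with marginal CDFs `F_X, F_Y` is bounded below by the
comonotonic integral of `c` along the quantile functions. -/
theorem expectation_lower_bound_comonotonic
    (μ : Measure (ℝ × ℝ)) [IsProbabilityMeasure μ]
    (c : ℝ × ℝ → ℝ) (hc_meas : Measurable c)
    (hMonge : ∀ x x' y y' : ℝ, x ≤ x' → y ≤ y' →
      c (x', y') + c (x, y) ≤ c (x, y') + c (x', y))
    (FX FY QX QY : ℝ → ℝ)
    (hFX : ∀ x, FX x = (μ {p : ℝ × ℝ | p.1 ≤ x}).toReal)
    (hFY : ∀ y, FY y = (μ {p : ℝ × ℝ | p.2 ≤ y}).toReal)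
    (hQX : ∀ u, QX u = sInf {x : ℝ | u ≤ FX x})
    (hQY : ∀ u, QY u = sInf {y : ℝ | u ≤ FY y})
    (hint : Integrable c μ)
    (hint_quant : IntegrableOn (fun u => c (QX u, QY u)) (Ioo (0:ℝ) 1) volume) :
    ∫ u in Ioo (0:ℝ) 1, c (QX u, QY u) ≤ ∫ p, c p ∂μ := by
  have := isProbabilityMeasure_uniformIoo
  have hm1 := Measure.isProbabilityMeasure_map (μ := μ) measurable_fst.aemeasurable
  have hm2 := Measure.isProbabilityMeasure_map (μ := μ) measurable_snd.aemeasurable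
  set x : Ioo (0 : ℝ) 1 → ℝ := fun u => QX u with hxdef
  set y : Ioo (0 : ℝ) 1 → ℝ := fun u => QY u with hydef
  have hqx : ∀ u : Ioo (0 : ℝ) 1,
      x u = sInf {z : ℝ | (u : ℝ) ≤ (μ.map Prod.fst).real (Iic z)} := by
    intro u
    simp only [hxdef, hQX, hFX, Measure.real, Measure.map_apply measurable_fst measurableSet_Iic]
    rfl
  have hqy : ∀ u : Ioo (0 : ℝ) 1,
      y u = sInf {z : ℝ | (u : ℝ) ≤ (μ.map Prod.snd).real (Iic z)} := by
    intro u
    simp only [hydef, hQY, hFY, Measure.real, Measure.map_apply measurable_snd measurableSet_Iic]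
    rfl
  have hx := monotone_quantile hqx
  have hy := monotone_quantile hqy
  obtain ⟨r, hr, hrx⟩ := exists_rank hqx
  obtain ⟨r', hr', hry⟩ := exists_rank hqy
  have o : Ioo (0 : ℝ) 1 := ⟨1 / 2, by norm_num⟩
  obtain ⟨φ, hφ⟩ := exists_potential o hMonge hx hy
  have hφm : Measurable φ := measurable_potential o hc_meas hMonge hx hy hφ
  set ψ : Ioo (0 : ℝ) 1 → ℝ := fun u => c (x u, y u) - φ u with hψ
  have hψm : Measurable ψ :=
    (hc_meas.comp (hx.measurable.prodMk hy.measurable)).sub hφm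
  have hφr : ∀ u, φ (r (x u)) = φ u := by
    intro u
    have h1 := hφ u (r (x u))
    have h2 := hφ (r (x u)) u
    rw [hrx] at h1 h2
    linarith
  have hψr : ∀ u, ψ (r' (y u)) = ψ u := by
    intro u
    have h1 := hφ u (r' (y u))
    have h2 := hφ (r' (y u)) u
    simp only [hψ]
    rw [hry] at h2 ⊢
    linarith
  have haex : ∀ᵐ p ∂μ, x (r p.1) = p.1 := by
    refine ae_of_ae_map (f := Prod.fst) (p := fun z => x (r z) = z) measurable_fst.aemeasurable ?_
    rw [← map_quantile hqx, ae_map_iff (p := fun z => x (r z) = z)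
      hx.measurable.aemeasurable
      (measurableSet_eq_fun (hx.measurable.comp hr) measurable_id)]
    exact Filter.Eventually.of_forall hrx
  have haey : ∀ᵐ p ∂μ, y (r' p.2) = p.2 := by
    refine ae_of_ae_map (f := Prod.snd) (p := fun z => y (r' z) = z) measurable_snd.aemeasurable ?_
    rw [← map_quantile hqy, ae_map_iff (p := fun z => y (r' z) = z)
      hy.measurable.aemeasurable
      (measurableSet_eq_fun (hy.measurable.comp hr') measurable_id)]
    exact Filter.Eventually.of_forall hry
  have hsum : (fun u => φ (r (x u)) + ψ (r' (y u))) = fun u : Ioo (0 : ℝ) 1 => c (QX u, QY u) := by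
    funext u
    rw [hφr, hψr]
    simp only [hψ, hxdef, hydef]
    ring
  have key := integral_add_le_of_marginals uniformIoo μ
    hx.measurable hy.measurable measurable_fst measurable_snd
    (map_quantile hqx) (map_quantile hqy) (hφm.comp hr) (hψm.comp hr') hint
    (by
      filter_upwards [haex, haey] with p h1 h2
      have h3 := hφ (r' p.2) (r p.1)
      rw [h1, h2] at h3
      simp only [Function.comp, hψ]
      rw [h2]
      linarith)
    (by
      simp only [Function.comp]
      rw [hsum]
      refine ((MeasurableEmbedding.subtype_coe measurableSet_Ioo).integrable_map_iff
        (g := fun u => c (QX u, QY u))).1 ?_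
      rw [uniformIoo, map_comap_subtype_coe measurableSet_Ioo]
      exact hint_quant)
  simp only [Function.comp] at key
  rw [hsum] at key
  rw [← integral_subtype_comap measurableSet_Ioo (fun u => c (QX u, QY u))]
  exact key
end

section
/- Let (X, Y) be a pair of real-valued random variables defined on a probability space, i.e., a probability measure μ on ℝ², with marginal cumulative distribution functions F_X and F_Y, and let Q_X(u) = inf{x ∈ ℝ : F_X(x) ≥ u} and Q_Y(u) = inf{y ∈ ℝ : F_Y(y) ≥ u} denote the corresponding quantile (generalized inverse) functions. Suppose c : ℝ × ℝ → ℝ is measurable and satisfies the Monge condition, i.e., c(x', y') + c(x, y) ≤ c(x, y') + c(x', y) for all x ≤ x' and y ≤ y'. If c(X, Y) is integrable with respect to μ and the function u ↦ c(Q_X(u), Q_Y(1 − u)) is integrable on (0,1) with respect to Lebesgue measure, then E[c(X, Y)] ≤ ∫₀¹ c(Q_X(u), Q_Y(1 − u)) du. -/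
open MeasureTheory Set

/-!
The proof is by duality. Write `x u = Q_X u` and `y u = Q_Y (1 - u)` for `u ∈ (0, 1)`. Since `x` is
monotone and `y` antitone, `C u v = c (x u, y v)` is supermodular, and for a supermodular `C` on a
linear order there is a potential `φ` with `C u v - C v v ≤ φ u - φ v` (`exists_potential`).
With `ψ v = C v v - φ v` this says `C u v ≤ φ u + ψ v`, with equality on the diagonal. Both
potentials are constant on the fibres of `x` and `y`, so they descend to functions `f`, `g` on the
line with `c (s, t) ≤ f s + g t` for `μ`-almost every `(s, t)` and equality along the
countermonotonic curve. The descent uses the mid-distribution function `midCDF` as a section of the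
quantile function.

No continuity of `c` is assumed, so measurability of the potentials needs an argument. After
subtracting functions of one variable, `C` may be taken to vanish when one argument equals `1/2`;
then the potentials are antitone on `(0, 1/2)` and monotone on `[1/2, 1)` (`measurable_potential`).

The functions `f (X)` and `g (Y)` need not be integrable separately. The comparison of the
integrals of `f + g` under the two couplings (`integral_le_of_le_add`) instead truncates `f` and `g`
symmetrically at level `n`: the truncated sum is bounded by `|f + g|`, because truncation is odd and
1-Lipschitz, and its integral depends on the marginals only. Dominated convergence concludes.
-/

/-! ### Potentials of supermodular functions -/

/-- `PotentialChain C b u s` says that some finite chain `b = t₀, t₁, …, tₙ = u` has total weight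
`s = ∑ (C tᵢ₊₁ tᵢ - C tᵢ tᵢ)`. -/
inductive PotentialChain {α : Type*} (C : α → α → ℝ) (b : α) : α → ℝ → Prop
  | base : PotentialChain C b b 0
  | step (u v : α) (s : ℝ) (h : PotentialChain C b v s) :
      PotentialChain C b u (s + (C u v - C v v))

/-- On a finite set a potential is built by adding points in increasing order, with the inequality
tight between consecutive points. -/
lemma exists_potential_finset_s1 {α : Type*} [LinearOrder α] (C : α → α → ℝ)
    (hC : ∀ u u' v v', u ≤ u' → v ≤ v' → C u v' + C u' v ≤ C u' v' + C u v) (S : Finset α) :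
    ∃ φ : α → ℝ, ∀ u ∈ S, ∀ v ∈ S, C u v - C v v ≤ φ u - φ v := by
  induction S using Finset.induction_on_max with
  | empty => exact ⟨0, by simp⟩
  | insert M S hM ih =>
    obtain ⟨φ, hφ⟩ := ih
    rcases S.eq_empty_or_nonempty with rfl | hne
    · exact ⟨0, by simp⟩
    set m := S.max' hne
    have hm : m ∈ S := S.max'_mem hne
    have hle : ∀ v ∈ S, v ≤ m := fun v hv => S.le_max' v hv
    refine ⟨fun u => if u = M then φ m + (C M m - C m m) else φ u, ?_⟩
    intro u hu v hv
    rcases Finset.mem_insert.1 hu with rfl | hu' <;> rcases Finset.mem_insert.1 hv with rfl | hv'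
    · simp
    · have h1 := hφ m hm v hv'
      have h2 := hC m u v m (hM m hm).le (hle v hv')
      simp only [if_true, if_neg (hM v hv').ne]
      linarith
    · have h1 := hφ u hu' m hm
      simp only [if_true, if_neg (hM u hu').ne]
      have h2 := hC u v m v (hM u hu').le (hM m hm).le
      linarith
    · simpa only [if_neg (hM u hu').ne, if_neg (hM v hv').ne] using hφ u hu' v hv'

/-- Weights of chains telescope against any potential defined on the vertices of the chain. -/
lemma PotentialChain.exists_finset {α : Type*} [DecidableEq α] {C : α → α → ℝ} {b u : α} {s : ℝ}
    (h : PotentialChain C b u s) :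
    ∃ S : Finset α, b ∈ S ∧ u ∈ S ∧ ∀ φ : α → ℝ,
      (∀ u ∈ S, ∀ v ∈ S, C u v - C v v ≤ φ u - φ v) → s ≤ φ u - φ b := by
  induction h with
  | base => exact ⟨{b}, by simp, by simp, fun φ _ => by simp⟩
  | step u v s _ ih =>
    obtain ⟨S, hb, hv, hS⟩ := ih
    refine ⟨insert u S, Finset.mem_insert_of_mem hb, Finset.mem_insert_self _ _, fun φ hφ => ?_⟩
    have h1 := hS φ fun a ha a' ha' =>
      hφ a (Finset.mem_insert_of_mem ha) a' (Finset.mem_insert_of_mem ha')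
    have h2 := hφ u (Finset.mem_insert_self _ _) v (Finset.mem_insert_of_mem hv)
    linarith

/-- The potential at `u` is the supremum of the weights of the chains from `b` to `u`; it is finite
because potentials exist on finite sets. -/
lemma exists_potential_s1 {α : Type*} [LinearOrder α] (b : α) (C : α → α → ℝ)
    (hC : ∀ u u' v v', u ≤ u' → v ≤ v' → C u v' + C u' v ≤ C u' v' + C u v) :
    ∃ φ : α → ℝ, ∀ u v, C u v - C v v ≤ φ u - φ v := by
  have hbdd : ∀ u, BddAbove {s | PotentialChain C b u s} := by
    intro u
    refine ⟨C u u - C b u, ?_⟩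
    intro s hs
    obtain ⟨S, hb, hu, hS⟩ := PotentialChain.exists_finset hs
    obtain ⟨φ, hφ⟩ := exists_potential_finset_s1 C hC S
    have := hS φ hφ
    have := hφ b hb u hu
    linarith
  refine ⟨fun u => sSup {s | PotentialChain C b u s}, fun u v => ?_⟩
  have : sSup {s | PotentialChain C b v s} ≤
      sSup {s | PotentialChain C b u s} - (C u v - C v v) := by
    refine csSup_le ⟨_, PotentialChain.step v b 0 PotentialChain.base⟩ fun s hs => ?_
    have := le_csSup (hbdd u) (PotentialChain.step u v s hs)
    linarith
  linarith

/-! ### Measurability -/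

lemma measurable_indicator_of_monotoneOn {f : ℝ → ℝ} {s : Set ℝ} [s.OrdConnected]
    (hf : MonotoneOn f s) : Measurable (s.indicator f) := by
  have hs : MeasurableSet s := OrdConnected.measurableSet ‹_›
  refine measurable_of_restrict_of_restrict_compl hs ?_ ?_
  · refine Monotone.measurable fun x y h => ?_
    simpa using hf x.2 y.2 h
  · convert! measurable_const (a := (0:ℝ)) using 1
    ext x
    exact indicator_of_notMem x.2 f

lemma measurable_indicator_of_antitoneOn {f : ℝ → ℝ} {s : Set ℝ} [s.OrdConnected]
    (hf : AntitoneOn f s) : Measurable (s.indicator f) := by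
  have := (measurable_indicator_of_monotoneOn hf.neg).neg
  convert this using 1
  ext x
  by_cases hx : x ∈ s <;> simp [hx]

/-- A potential for `C` is piecewise monotone once `C` is normalised to vanish in the column `b`. -/
lemma measurable_potential_s1 {C : Ioo (0:ℝ) 1 → Ioo (0:ℝ) 1 → ℝ} {b : Ioo (0:ℝ) 1}
    (hC : ∀ u u' v v', u ≤ u' → v ≤ v' → C u v' + C u' v ≤ C u' v' + C u v)
    (hCb : ∀ u, C u b = 0)
    {φ : Ioo (0:ℝ) 1 → ℝ} (hφ : ∀ u v, C u v - C v v ≤ φ u - φ v) :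
    Measurable fun u : ℝ => if h : u ∈ Ioo (0:ℝ) 1 then φ ⟨u, h⟩ else 0 := by
  set f : ℝ → ℝ := fun u : ℝ => if h : u ∈ Ioo (0:ℝ) 1 then φ ⟨u, h⟩ else 0 with hf
  have h1 : AntitoneOn f (Ioo 0 (b : ℝ)) := by
    intro u hu v hv huv
    have hu' : u ∈ Ioo (0:ℝ) 1 := ⟨hu.1, hu.2.trans b.2.2⟩
    have hv' : v ∈ Ioo (0:ℝ) 1 := ⟨hv.1, hv.2.trans b.2.2⟩
    have h2 := hC ⟨u, hu'⟩ ⟨v, hv'⟩ ⟨v, hv'⟩ b huv hv.2.le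
    have h3 := hφ ⟨u, hu'⟩ ⟨v, hv'⟩
    simp only [hf, dif_pos hu', dif_pos hv']
    rw [hCb, hCb] at h2
    linarith
  have h2 : MonotoneOn f (Ico (b : ℝ) 1) := by
    intro u hu v hv huv
    have hu' : u ∈ Ioo (0:ℝ) 1 := ⟨b.2.1.trans_le hu.1, hu.2⟩
    have hv' : v ∈ Ioo (0:ℝ) 1 := ⟨b.2.1.trans_le hv.1, hv.2⟩
    have h2 := hC ⟨u, hu'⟩ ⟨v, hv'⟩ b ⟨u, hu'⟩ huv hu.1
    have h3 := hφ ⟨v, hv'⟩ ⟨u, hu'⟩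
    simp only [hf, dif_pos hu', dif_pos hv']
    rw [hCb, hCb] at h2
    linarith
  have h3 : f = (Ioo 0 (b : ℝ)).indicator f + (Ico (b : ℝ) 1).indicator f := by
    have hdisj : Disjoint (Ioo 0 (b : ℝ)) (Ico (b : ℝ) 1) := by
      rw [Set.disjoint_left]
      exact fun u hu hu' => absurd hu.2 (not_lt.2 hu'.1)
    have hunion := indicator_union_of_disjoint hdisj f
    rw [Ioo_union_Ico_eq_Ioo b.2.1 b.2.2.le, indicator_eq_self.2] at hunion
    · exact hunion
    · intro u hu
      by_contra h
      exact hu (dif_neg h)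
  rw [h3]
  exact (measurable_indicator_of_antitoneOn h1).add (measurable_indicator_of_monotoneOn h2)

/-! ### Comparison of integrals under two couplings -/

/-- Truncation of `t` to the interval `[-n, n]`. -/
def clip (n : ℕ) (t : ℝ) : ℝ := max (-n) (min n t)

lemma measurable_clip (n : ℕ) : Measurable (clip n) := by unfold clip; fun_prop

lemma abs_clip_le (n : ℕ) (t : ℝ) : |clip n t| ≤ n := by
  have : (0:ℝ) ≤ n := n.cast_nonneg
  unfold clip; grind

lemma clip_add_le (n : ℕ) (s t : ℝ) : |clip n s + clip n t| ≤ |s + t| := by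
  have : (0:ℝ) ≤ n := n.cast_nonneg
  unfold clip; grind

lemma min_le_clip_add (n : ℕ) (s t : ℝ) : min (s + t) 0 ≤ clip n s + clip n t := by
  have : (0:ℝ) ≤ n := n.cast_nonneg
  unfold clip; grind

lemma tendsto_clip (t : ℝ) : Filter.Tendsto (fun n => clip n t) Filter.atTop (nhds t) := by
  refine tendsto_const_nhds.congr' ?_
  obtain ⟨N, hN⟩ := exists_nat_ge |t|
  filter_upwards [Filter.eventually_ge_atTop N] with n hn
  have : (N : ℝ) ≤ n := by exact_mod_cast hn
  unfold clip; grind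

lemma integrable_clip {β : Type*} [MeasurableSpace β] (κ : Measure β) [IsProbabilityMeasure κ]
    (n : ℕ) (h : β → ℝ) (hh : AEMeasurable h κ) : Integrable (fun x => clip n (h x)) κ :=
  Integrable.of_bound ((measurable_clip n).comp_aemeasurable hh).aestronglyMeasurable n
    (Filter.Eventually.of_forall fun x => by simpa using abs_clip_le n (h x))

/-- Weak duality, without integrability of `f (X)` and `g (Y)` separately. -/
lemma integral_le_of_le_add {μ : Measure (ℝ × ℝ)} [IsProbabilityMeasure μ]
    {Ω : Type*} [MeasurableSpace Ω] {ν : Measure Ω} [IsProbabilityMeasure ν]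
    {X Y : Ω → ℝ} (hX : AEMeasurable X ν) (hY : AEMeasurable Y ν)
    (hXμ : ν.map X = μ.map Prod.fst) (hYμ : ν.map Y = μ.map Prod.snd)
    {c : ℝ × ℝ → ℝ} (hc : Integrable c μ) {f g : ℝ → ℝ} (hf : Measurable f) (hg : Measurable g)
    (hle : ∀ᵐ p ∂μ, c p ≤ f p.1 + g p.2)
    (hint : Integrable (fun ω => f (X ω) + g (Y ω)) ν) :
    ∫ p, c p ∂μ ≤ ∫ ω, (f (X ω) + g (Y ω)) ∂ν := by
  have hfX : AEMeasurable (fun ω => f (X ω)) ν := hf.comp_aemeasurable hX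
  have hgY : AEMeasurable (fun ω => g (Y ω)) ν := hg.comp_aemeasurable hY
  have hfμ : AEMeasurable (fun p : ℝ × ℝ => f p.1) μ := (hf.comp measurable_fst).aemeasurable
  have hgμ : AEMeasurable (fun p : ℝ × ℝ => g p.2) μ := (hg.comp measurable_snd).aemeasurable
  have heq : ∀ n : ℕ, ∫ p, (clip n (f p.1) + clip n (g p.2)) ∂μ =
      ∫ ω, (clip n (f (X ω)) + clip n (g (Y ω))) ∂ν := by
    intro n
    have hcf : Measurable fun t => clip n (f t) := (measurable_clip n).comp hf
    have hcg : Measurable fun t => clip n (g t) := (measurable_clip n).comp hg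
    rw [integral_add (integrable_clip μ n _ hfμ) (integrable_clip μ n _ hgμ),
      integral_add (integrable_clip ν n _ hfX) (integrable_clip ν n _ hgY),
      ← integral_map (φ := X) (f := fun t => clip n (f t)) hX hcf.aestronglyMeasurable,
      ← integral_map (φ := Y) (f := fun t => clip n (g t)) hY hcg.aestronglyMeasurable,
      hXμ, hYμ, integral_map measurable_fst.aemeasurable hcf.aestronglyMeasurable,
      integral_map measurable_snd.aemeasurable hcg.aestronglyMeasurable]
  have hν : Filter.Tendsto (fun n : ℕ => ∫ ω, (clip n (f (X ω)) + clip n (g (Y ω))) ∂ν)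
      Filter.atTop (nhds (∫ ω, (f (X ω) + g (Y ω)) ∂ν)) := by
    refine tendsto_integral_of_dominated_convergence (fun ω => |f (X ω) + g (Y ω)|)
      (fun n => ((integrable_clip ν n _ hfX).add (integrable_clip ν n _ hgY)).aestronglyMeasurable)
      hint.abs
      (fun n => Filter.Eventually.of_forall fun ω => by simpa using clip_add_le n _ _)
      (Filter.Eventually.of_forall fun ω => (tendsto_clip _).add (tendsto_clip _))
  have hi : ∀ n : ℕ, Integrable (fun p : ℝ × ℝ => clip n (f p.1) + clip n (g p.2)) μ :=
    fun n => (integrable_clip μ n _ hfμ).add (integrable_clip μ n _ hgμ)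
  -- `min c (truncated sum)` lies between `min c 0` and `c`, which gives the domination by `|c|`
  have hμ : Filter.Tendsto (fun n : ℕ => ∫ p, min (c p) (clip n (f p.1) + clip n (g p.2)) ∂μ)
      Filter.atTop (nhds (∫ p, c p ∂μ)) := by
    refine tendsto_integral_of_dominated_convergence (fun p => |c p|)
      (fun n => (hc.inf (hi n)).aestronglyMeasurable) hc.abs (fun n => ?_) ?_
    · filter_upwards [hle] with p hp
      have := min_le_clip_add n (f p.1) (g p.2)
      rw [Real.norm_eq_abs]
      grind
    · filter_upwards [hle] with p hp
      have := (tendsto_const_nhds (x := c p)).min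
        ((tendsto_clip (f p.1)).add (tendsto_clip (g p.2)))
      rwa [min_eq_left hp] at this
  refine le_of_tendsto_of_tendsto' hμ hν fun n => ?_
  rw [← heq n]
  exact integral_mono (hc.inf (hi n)) (hi n) fun p => min_le_right _ _

/-! ### Quantile functions -/

open ProbabilityTheory in
/-- The quantile function of `P`, meaningful for `u ∈ (0, 1)`. -/
noncomputable def quantile (P : Measure ℝ) (u : ℝ) : ℝ := sInf {x : ℝ | u ≤ cdf P x}

open ProbabilityTheory in
/-- The mid-distribution function `(F(x-) + F(x)) / 2`. Unlike `F`, it takes a value in the open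
interval `(0, 1)` also at an atom sitting at the right end of the support. -/
noncomputable def midCDF (P : Measure ℝ) (x : ℝ) : ℝ :=
  (Function.leftLim (cdf P) x + cdf P x) / 2

section Quantile

open ProbabilityTheory

lemma measurable_midCDF (P : Measure ℝ) : Measurable (midCDF P) :=
  Monotone.measurable fun x y h => by
    have h1 := (monotone_cdf P).leftLim h
    have h2 := monotone_cdf P h
    unfold midCDF
    linarith

lemma quantile_le_iff_s1 (P : Measure ℝ) {u : ℝ} (hu : u ∈ Ioo (0:ℝ) 1) (x : ℝ) :
    quantile P u ≤ x ↔ u ≤ cdf P x := by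
  have hbdd : BddBelow {x : ℝ | u ≤ cdf P x} := by
    obtain ⟨a, ha⟩ := ((tendsto_cdf_atBot P).eventually_lt_const hu.1).exists
    refine ⟨a, fun z hz => ?_⟩
    by_contra h
    exact absurd ((hz.trans (monotone_cdf P (not_le.1 h).le)).trans_lt ha) (lt_irrefl _)
  have hne : {x : ℝ | u ≤ cdf P x}.Nonempty := by
    obtain ⟨a, ha⟩ := ((tendsto_cdf_atTop P).eventually_const_lt hu.2).exists
    exact ⟨a, ha.le⟩
  refine ⟨fun h => ?_, fun h => csInf_le hbdd h⟩
  refine le_trans ?_ (monotone_cdf P h)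
  have hcont : Filter.Tendsto (cdf P) (nhdsWithin (quantile P u) (Ioi (quantile P u)))
      (nhds (cdf P (quantile P u))) :=
    ((cdf P).right_continuous _).mono_left (nhdsWithin_mono _ Ioi_subset_Ici_self)
  refine ge_of_tendsto hcont ?_
  filter_upwards [self_mem_nhdsWithin] with z hz
  obtain ⟨w, hw, hwz⟩ := exists_lt_of_csInf_lt hne hz
  exact le_trans hw (monotone_cdf P hwz.le)

lemma monotoneOn_quantile (P : Measure ℝ) : MonotoneOn (quantile P) (Ioo 0 1) :=
  fun _ hu _ hv huv =>
    (quantile_le_iff_s1 P hu _).2 (huv.trans ((quantile_le_iff_s1 P hv _).1 le_rfl))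

lemma aemeasurable_quantile (P : Measure ℝ) :
    AEMeasurable (quantile P) (volume.restrict (Ioo 0 1)) :=
  aemeasurable_restrict_of_monotoneOn measurableSet_Ioo (monotoneOn_quantile P)

/-- The quantile function of `P` at a uniform variable has law `P`. -/
lemma map_quantile_s1 (P : Measure ℝ) [IsProbabilityMeasure P] :
    (volume.restrict (Ioo (0:ℝ) 1)).map (quantile P) = P := by
  have : IsFiniteMeasure ((volume.restrict (Ioo (0:ℝ) 1)).map (quantile P)) := inferInstance
  refine Measure.ext_of_Iic _ _ fun x => ?_
  rw [Measure.map_apply_of_aemeasurable (aemeasurable_quantile P) measurableSet_Iic,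
    Measure.restrict_apply' measurableSet_Ioo, ← ofReal_cdf]
  have h : quantile P ⁻¹' Iic x ∩ Ioo 0 1 = Iic (cdf P x) ∩ Ioo 0 1 := by
    ext u
    simp only [mem_inter_iff, mem_preimage, mem_Iic, and_congr_left_iff]
    exact fun hu => quantile_le_iff_s1 P hu x
  rw [h]
  have h1 := cdf_le_one P x
  apply le_antisymm
  · calc volume (Iic (cdf P x) ∩ Ioo 0 1) ≤ volume (Icc 0 (cdf P x)) :=
          measure_mono fun u hu => mem_Icc.2 ⟨hu.2.1.le, hu.1⟩
      _ = _ := by simp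
  · calc ENNReal.ofReal (cdf P x) = volume (Ioo 0 (cdf P x)) := by simp
      _ ≤ volume (Iic (cdf P x) ∩ Ioo 0 1) := measure_mono fun u hu =>
          ⟨mem_Iic.2 hu.2.le, hu.1, hu.2.trans_le h1⟩

/-- `midCDF P` is a section of the quantile function over its range. For `x = quantile P u` one has
`F(x-) ≤ u ≤ F(x)`; if both ends agree, then `midCDF P x = u`, and otherwise `midCDF P x` lies in
`(F(x-), F(x)]`, where the quantile function is constantly `x`. -/
lemma quantile_midCDF_quantile (P : Measure ℝ) {u : ℝ} (hu : u ∈ Ioo (0:ℝ) 1) :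
    midCDF P (quantile P u) ∈ Ioo (0:ℝ) 1 ∧
      quantile P (midCDF P (quantile P u)) = quantile P u := by
  set x := quantile P u with hx
  have hM : u ≤ cdf P x := (quantile_le_iff_s1 P hu x).1 le_rfl
  have hm : Function.leftLim (cdf P) x ≤ u := by
    refine le_of_tendsto ((monotone_cdf P).tendsto_leftLim x) ?_
    filter_upwards [self_mem_nhdsWithin] with z hz
    by_contra h
    exact absurd ((quantile_le_iff_s1 P hu z).2 (not_le.1 h).le) (not_le.2 hz)
  have hM1 := cdf_le_one P x
  have hm0 : 0 ≤ Function.leftLim (cdf P) x :=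
    (cdf_nonneg P (x - 1)).trans ((monotone_cdf P).le_leftLim (by linarith))
  have hmem : midCDF P x ∈ Ioo (0:ℝ) 1 := by
    have := hu.1
    have := hu.2
    constructor <;> unfold midCDF <;> linarith
  refine ⟨hmem, ?_⟩
  rcases (hm.trans hM).eq_or_lt with h | h
  · have : midCDF P x = u := by unfold midCDF; linarith
    rw [this]
  · refine le_antisymm ((quantile_le_iff_s1 P hmem x).2 (by unfold midCDF; linarith)) ?_
    by_contra hlt
    have h1 := (quantile_le_iff_s1 P hmem _).1 le_rfl
    have h2 := (monotone_cdf P).le_leftLim (not_le.1 hlt)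
    unfold midCDF at h1 h2
    linarith

lemma ae_quantile_midCDF (P : Measure ℝ) [IsProbabilityMeasure P] :
    ∀ᵐ x ∂P, midCDF P x ∈ Ioo (0:ℝ) 1 ∧ quantile P (midCDF P x) = x := by
  -- the indicator makes the quantile function Borel, so that the set below is measurable
  have hQ := measurable_indicator_of_monotoneOn (monotoneOn_quantile P)
  have key : ∀ᵐ x ∂P, midCDF P x ∈ Ioo (0:ℝ) 1 ∧
      (Ioo (0:ℝ) 1).indicator (quantile P) (midCDF P x) = x := by
    have hms : MeasurableSet {x | midCDF P x ∈ Ioo (0:ℝ) 1 ∧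
        (Ioo (0:ℝ) 1).indicator (quantile P) (midCDF P x) = x} :=
      (measurable_midCDF P measurableSet_Ioo).inter
        (measurableSet_eq_fun (hQ.comp (measurable_midCDF P)) measurable_id)
    have h := (ae_map_iff (aemeasurable_quantile P) hms).2 <| by
      filter_upwards [ae_restrict_mem measurableSet_Ioo] with u hu
      obtain ⟨h1, h2⟩ := quantile_midCDF_quantile P hu
      exact ⟨h1, by rw [indicator_of_mem h1, h2]⟩
    rwa [map_quantile_s1 P] at h
  filter_upwards [key] with x hx
  exact ⟨hx.1, by simpa [indicator_of_mem hx.1] using hx.2⟩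

end Quantile

/-! ### The upper bound -/

/-- Rachev–Rüschendorf upper bound (countermonotonic coupling): for a submodular cost `c`
(satisfying the Monge condition), the expectation of `c (X, Y)` under any joint
distribution `μ` on `ℝ²` with marginal CDFs `F_X, F_Y` is bounded above by the
countermonotonic integral of `c` along the quantile functions. -/
theorem expectation_upper_bound_countermonotonic
    (μ : Measure (ℝ × ℝ)) [IsProbabilityMeasure μ]
    (c : ℝ × ℝ → ℝ) (hc_meas : Measurable c)
    (hMonge : ∀ x x' y y' : ℝ, x ≤ x' → y ≤ y' →
      c (x', y') + c (x, y) ≤ c (x, y') + c (x', y))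
    (FX FY QX QY : ℝ → ℝ)
    (hFX : ∀ x, FX x = (μ {p : ℝ × ℝ | p.1 ≤ x}).toReal)
    (hFY : ∀ y, FY y = (μ {p : ℝ × ℝ | p.2 ≤ y}).toReal)
    (hQX : ∀ u, QX u = sInf {x : ℝ | u ≤ FX x})
    (hQY : ∀ u, QY u = sInf {y : ℝ | u ≤ FY y})
    (hint : Integrable c μ)
    (hint_quant : IntegrableOn (fun u => c (QX u, QY (1 - u))) (Ioo (0:ℝ) 1) volume) :
    ∫ p, c p ∂μ ≤ ∫ u in Ioo (0:ℝ) 1, c (QX u, QY (1 - u)) := by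
  set PX := μ.map Prod.fst with hPX
  set PY := μ.map Prod.snd with hPY
  have : IsProbabilityMeasure PX := Measure.isProbabilityMeasure_map measurable_fst.aemeasurable
  have : IsProbabilityMeasure PY := Measure.isProbabilityMeasure_map measurable_snd.aemeasurable
  obtain rfl : QX = quantile PX := by
    ext u
    rw [hQX, quantile]
    congr! 4 with x
    rw [hFX, ProbabilityTheory.cdf_eq_real, measureReal_def, hPX,
      Measure.map_apply measurable_fst measurableSet_Iic]
    rfl
  obtain rfl : QY = quantile PY := by
    ext u
    rw [hQY, quantile]
    congr! 4 with x
    rw [hFY, ProbabilityTheory.cdf_eq_real, measureReal_def, hPY,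
      Measure.map_apply measurable_snd measurableSet_Iic]
    rfl
  set b : Ioo (0:ℝ) 1 := ⟨1 / 2, by norm_num, by norm_num⟩
  set x : Ioo (0:ℝ) 1 → ℝ := fun u => quantile PX u with hx
  set y : Ioo (0:ℝ) 1 → ℝ := fun u => quantile PY (1 - u) with hy
  have hsymm : ∀ {t : ℝ}, t ∈ Ioo (0:ℝ) 1 → 1 - t ∈ Ioo (0:ℝ) 1 :=
    fun ht => ⟨by linarith [ht.2], by linarith [ht.1]⟩
  have hxm : Monotone x := fun u v h => monotoneOn_quantile PX u.2 v.2 h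
  have hym : Antitone y := fun u v h =>
    monotoneOn_quantile PY (hsymm v.2) (hsymm u.2) (by have : (u : ℝ) ≤ v := h; linarith)
  -- normalised so that `C u b = C b v = 0`
  set C : Ioo (0:ℝ) 1 → Ioo (0:ℝ) 1 → ℝ := fun u v =>
    c (x u, y v) - c (x u, y b) - c (x b, y v) + c (x b, y b) with hCdef
  have hC : ∀ u u' v v', u ≤ u' → v ≤ v' → C u v' + C u' v ≤ C u' v' + C u v := by
    intro u u' v v' hu hv
    have := hMonge _ _ _ _ (hxm hu) (hym hv)
    simp only [hCdef]
    linarith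
  obtain ⟨φ, hφ⟩ := exists_potential_s1 b C hC
  set ψ : Ioo (0:ℝ) 1 → ℝ := fun v => C v v - φ v with hψdef
  have hψ : ∀ v u, C u v - C u u ≤ ψ v - ψ u := by
    intro v u
    have := hφ u v
    simp only [hψdef]
    linarith
  have hφm := measurable_potential_s1 (b := b) hC (fun u => by simp [hCdef]) hφ
  have hψm := measurable_potential_s1 (C := fun v u => C u v) (b := b)
    (fun u u' v v' hu hv => by have := hC v v' u u' hv hu; linarith)
    (fun u => by simp [hCdef]) hψ
  set φe : ℝ → ℝ := fun u => if h : u ∈ Ioo (0:ℝ) 1 then φ ⟨u, h⟩ else 0 with hφe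
  set ψe : ℝ → ℝ := fun u => if h : u ∈ Ioo (0:ℝ) 1 then ψ ⟨u, h⟩ else 0 with hψe
  set f : ℝ → ℝ := fun s => φe (midCDF PX s) + c (s, y b) - c (x b, y b) with hf
  set g : ℝ → ℝ := fun t => ψe (1 - midCDF PY t) + c (x b, t) with hg
  have hfm : Measurable f := by
    have := measurable_midCDF PX
    fun_prop
  have hgm : Measurable g := by
    have := measurable_midCDF PY
    fun_prop
  have hle : ∀ᵐ p ∂μ, c p ≤ f p.1 + g p.2 := by
    filter_upwards [ae_of_ae_map measurable_fst.aemeasurable (ae_quantile_midCDF PX),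
      ae_of_ae_map measurable_snd.aemeasurable (ae_quantile_midCDF PY)] with p h1 h2
    obtain ⟨s, t⟩ := p
    obtain ⟨hs, hs'⟩ := h1
    obtain ⟨ht, ht'⟩ := h2
    simp only at hs hs' ht ht'
    have hxs : x ⟨_, hs⟩ = s := hs'
    have hyt : y ⟨_, hsymm ht⟩ = t := by simp only [hy, sub_sub_cancel, ht']
    have h := hφ ⟨_, hs⟩ ⟨_, hsymm ht⟩
    simp only [hf, hg, hφe, hψe, dif_pos hs, dif_pos (hsymm ht), hψdef]
    have h3 : C ⟨_, hs⟩ ⟨_, hsymm ht⟩ = c (s, t) - c (s, y b) - c (x b, t) + c (x b, y b) := by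
      simp only [hCdef, hxs, hyt]
    linarith
  have heq : ∀ u ∈ Ioo (0:ℝ) 1,
      f (quantile PX u) + g (quantile PY (1 - u)) = c (quantile PX u, quantile PY (1 - u)) := by
    intro u hu
    -- the potentials agree at parameters with the same image under `x`, respectively `y`
    obtain ⟨hs, hs'⟩ := quantile_midCDF_quantile PX hu
    obtain ⟨ht, ht'⟩ := quantile_midCDF_quantile PY (hsymm hu)
    have hxs : x ⟨_, hs⟩ = x ⟨u, hu⟩ := hs'
    have hyt : y ⟨_, hsymm ht⟩ = y ⟨u, hu⟩ := by simp only [hy, sub_sub_cancel, ht']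
    have hφu : φ ⟨_, hs⟩ = φ ⟨u, hu⟩ := by
      have h1 := hφ ⟨_, hs⟩ ⟨u, hu⟩
      have h2 := hφ ⟨u, hu⟩ ⟨_, hs⟩
      simp only [hCdef, hxs] at h1 h2
      linarith
    have hψu : ψ ⟨_, hsymm ht⟩ = ψ ⟨u, hu⟩ := by
      have h1 := hψ ⟨_, hsymm ht⟩ ⟨u, hu⟩
      have h2 := hψ ⟨u, hu⟩ ⟨_, hsymm ht⟩
      simp only [hCdef, hyt] at h1 h2
      linarith
    simp only [hf, hg, hφe, hψe, dif_pos hs, dif_pos (hsymm ht), hφu, hψu]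
    simp only [hψdef, hCdef, hx, hy]
    ring
  have : IsProbabilityMeasure (volume.restrict (Ioo (0:ℝ) 1)) := ⟨by simp⟩
  have hflip : MeasurePreserving (fun u : ℝ => 1 - u) (volume.restrict (Ioo (0:ℝ) 1))
      (volume.restrict (Ioo (0:ℝ) 1)) := by
    have := (Measure.measurePreserving_sub_left (volume : Measure ℝ) 1).restrict_preimage
      (s := Ioo (0:ℝ) 1) measurableSet_Ioo
    simpa using this
  have hYm : AEMeasurable (fun u => quantile PY (1 - u)) (volume.restrict (Ioo (0:ℝ) 1)) :=
    (aemeasurable_quantile PY).comp_quasiMeasurePreserving hflip.quasiMeasurePreserving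
  have hYmap : (volume.restrict (Ioo (0:ℝ) 1)).map (fun u => quantile PY (1 - u)) = PY := by
    have hq : AEMeasurable (quantile PY)
        ((volume.restrict (Ioo (0:ℝ) 1)).map fun u : ℝ => 1 - u) := by
      rw [hflip.map_eq]
      exact aemeasurable_quantile PY
    have := AEMeasurable.map_map_of_aemeasurable hq hflip.measurable.aemeasurable
    rw [hflip.map_eq, map_quantile_s1] at this
    exact this.symm
  rw [← setIntegral_congr_fun measurableSet_Ioo heq]
  exact integral_le_of_le_add (aemeasurable_quantile PX) hYm (map_quantile_s1 PX) hYmap hint hfm hgm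
    hle ((integrableOn_congr_fun heq measurableSet_Ioo).2 hint_quant)
end

section
/- Let (X, Y) be a pair of real-valued random variables given by a probability measure μ on ℝ², with marginal quantile functions Q_X(u) = inf{x : F_X(x) ≥ u} and Q_Y(u) = inf{y : F_Y(y) ≥ u}. Suppose c : ℝ × ℝ → ℝ is measurable and −c satisfies the Monge condition, i.e., c is supermodular: c(x', y') + c(x, y) ≥ c(x, y') + c(x', y) for all x ≤ x' and y ≤ y'. If c(X, Y) and the functions u ↦ c(Q_X(u), Q_Y(u)) and u ↦ c(Q_X(u), Q_Y(1−u)) are integrable, then ∫₀¹ c(Q_X(u), Q_Y(1 − u)) du ≤ E[c(X, Y)] ≤ ∫₀¹ c(Q_X(u), Q_Y(u)) du; that is, for supermodular cost functions the roles of the comonotonic and countermonotonic bounds are reversed. -/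
/-!
Write `M` and `N` for the comonotonic and the countermonotonic coupling of the marginals, and let
`(x₀, y₀)` be the pair of medians. Split `c (x, y) = a x + b y + G (x, y)` with `a x = c (x, y₀)`,
`b y = c (x₀, y) - c (x₀, y₀)` and `G` the mixed second difference based at `(x₀, y₀)`.

Supermodularity makes `G` nonnegative on the upper right and lower left quadrants at `(x₀, y₀)`,
which carry `M`, and nonpositive on the other two, which carry `N`.

*The part `G`.* On each quadrant `|G|` is, after reflections, a nonnegative supermodular function
that is monotone in each variable. Such a function is an increasing limit of sums of functions
`1_{g ≤ x} k(y)` with `k ≥ 0` monotone (`lintegral_grid_le`); since `c` need not be continuous, the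
grid has to contain the jumps in `x`, of which there are countably many uniformly in `y`
(`exists_countable_approx`). For those functions the layer-cake formula reduces the comparison to
products of rays, where the couplings attain the largest mass the marginals allow because the two
events are nested (`prod_le_of_nested`). Hence `E_μ[G⁺] ≤ E_M[G⁺] = E_M[G]` and
`E_μ[G⁻] ≤ E_N[G⁻] = -E_N[G]` (`lintegral_mixedDiff_le`).

*The part `a + b`.* The functions `a(X)` and `b(Y)` need not be integrable separately. Truncating
both at level `n` keeps the sign of the sum and does not increase its size, so by dominated
convergence `E[a(X) + b(Y)]` depends on the marginals only, whenever it exists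
(`integral_sum_eq`). The sign of `G` shows that `a + b` has integrable positive part under `M` and
integrable negative part under `N`; the same truncation with Fatou's lemma then gives
integrability under both (`integrable_sum`). So `G` is integrable under `M` and `N`, hence under
`μ`, and the inequalities for `G` give those for `c`.
-/

open MeasureTheory Set
open scoped ENNReal
open Filter Topology

/-! ### Comparison on one quadrant -/

theorem lintegral_step_le {Ω : Type*} [MeasurableSpace Ω] (P M : Measure Ω) (X Y : Ω → ℝ)
    (hX : Measurable X) (hY : Measurable Y)
    (hPM : ∀ A B : Set ℝ, IsUpperSet A → IsUpperSet B →
      P (X ⁻¹' A ∩ Y ⁻¹' B) ≤ M (X ⁻¹' A ∩ Y ⁻¹' B))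
    (g : ℝ) (k : ℝ → ℝ) (hk : Monotone k) (hk0 : ∀ y, 0 ≤ k y) :
    ∫⁻ ω, ENNReal.ofReal ({ω | g ≤ X ω}.indicator (fun ω => k (Y ω)) ω) ∂P ≤
      ∫⁻ ω, ENNReal.ofReal ({ω | g ≤ X ω}.indicator (fun ω => k (Y ω)) ω) ∂M := by
  have hm : Measurable ({ω | g ≤ X ω}.indicator (fun ω => k (Y ω))) :=
    (hk.measurable.comp hY).indicator (measurableSet_le measurable_const hX)
  have h0 : ∀ ω, 0 ≤ {ω | g ≤ X ω}.indicator (fun ω => k (Y ω)) ω := fun ω =>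
    indicator_nonneg (fun ω _ => hk0 _) ω
  rw [lintegral_eq_lintegral_meas_lt P (ae_of_all _ h0) hm.aemeasurable,
    lintegral_eq_lintegral_meas_lt M (ae_of_all _ h0) hm.aemeasurable]
  refine setLIntegral_mono' measurableSet_Ioi fun t ht => ?_
  have ht' : (0 : ℝ) < t := ht
  have : {ω | t < {ω | g ≤ X ω}.indicator (fun ω => k (Y ω)) ω} =
      X ⁻¹' Ici g ∩ Y ⁻¹' {y | t < k y} := by
    ext ω
    by_cases h : g ≤ X ω <;> simp [indicator, h, ht'.le]
  rw [this]
  exact hPM _ _ (isUpperSet_Ici g) fun y y' hle hy => lt_of_lt_of_le hy (hk hle)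

/-- Comparison for the finite lower approximation
`(x, y) ↦ max {H d y | d ∈ S, d ≤ x}` (with value `0` if no such `d` exists). -/
theorem lintegral_grid_le {Ω : Type*} [MeasurableSpace Ω] (P M : Measure Ω) (X Y : Ω → ℝ)
    (hX : Measurable X) (hY : Measurable Y)
    (hPM : ∀ A B : Set ℝ, IsUpperSet A → IsUpperSet B →
      P (X ⁻¹' A ∩ Y ⁻¹' B) ≤ M (X ⁻¹' A ∩ Y ⁻¹' B))
    (H : ℝ → ℝ → ℝ) (h0 : ∀ x y, 0 ≤ H x y) (hx : ∀ y, Monotone fun x => H x y)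
    (hy : ∀ x, Monotone (H x))
    (hs : ∀ x x' y y', x ≤ x' → y ≤ y' → H x y' + H x' y ≤ H x' y' + H x y)
    (S : Finset ℝ) :
    ∫⁻ ω, S.sup (fun d => if d ≤ X ω then ENNReal.ofReal (H d (Y ω)) else 0) ∂P ≤
      ∫⁻ ω, S.sup (fun d => if d ≤ X ω then ENNReal.ofReal (H d (Y ω)) else 0) ∂M := by
  induction S using Finset.induction_on_max with
  | empty => simp
  | insert g S hg ih =>
    -- adjoining a new maximal point `g` adds `1_{g ≤ x} k(y)` with `k` nonnegative and monotone
    obtain ⟨k, hk, hk0, hkS⟩ : ∃ k : ℝ → ℝ, Monotone k ∧ (∀ y, 0 ≤ k y) ∧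
        ∀ y, S.sup (fun d => ENNReal.ofReal (H d y)) + ENNReal.ofReal (k y)
          = ENNReal.ofReal (H g y) := by
      rcases S.eq_empty_or_nonempty with rfl | hne
      · exact ⟨H g, hy g, h0 g, fun y => by simp⟩
      · have hm : S.max' hne < g := hg _ (S.max'_mem hne)
        refine ⟨fun y => H g y - H (S.max' hne) y, fun y y' h => ?_, fun y => ?_, fun y => ?_⟩
        · have := hs _ _ _ _ hm.le h
          simp only
          linarith
        · exact sub_nonneg.2 (hx y hm.le)
        · have : S.sup (fun d => ENNReal.ofReal (H d y)) = ENNReal.ofReal (H (S.max' hne) y) :=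
            le_antisymm
              (Finset.sup_le fun d hd => ENNReal.ofReal_le_ofReal (hx y (S.le_max' d hd)))
              (Finset.le_sup (f := fun d => ENNReal.ofReal (H d y)) (S.max'_mem hne))
          rw [this, ← ENNReal.ofReal_add (h0 _ _) (sub_nonneg.2 (hx y hm.le))]
          congr 1
          ring
    have key : ∀ ω, (insert g S).sup
        (fun d => if d ≤ X ω then ENNReal.ofReal (H d (Y ω)) else 0) =
        S.sup (fun d => if d ≤ X ω then ENNReal.ofReal (H d (Y ω)) else 0) +
          ENNReal.ofReal ({ω | g ≤ X ω}.indicator (fun ω => k (Y ω)) ω) := by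
      intro ω
      rw [Finset.sup_insert]
      by_cases h : g ≤ X ω
      · have h1 : S.sup (fun d => if d ≤ X ω then ENNReal.ofReal (H d (Y ω)) else 0) =
            S.sup (fun d => ENNReal.ofReal (H d (Y ω))) :=
          Finset.sup_congr rfl fun d hd => if_pos ((hg d hd).le.trans h)
        have h2 : ω ∈ {ω | g ≤ X ω} := h
        rw [h1, indicator_of_mem h2, hkS, if_pos h]
        refine sup_eq_left.2 (Finset.sup_le fun d hd => ?_)
        exact ENNReal.ofReal_le_ofReal (hx _ (hg d hd).le)
      · have h2 : ω ∉ {ω | g ≤ X ω} := h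
        rw [indicator_of_notMem h2, if_neg h]
        simp
    have hmeas : Measurable fun ω =>
        ENNReal.ofReal ({ω | g ≤ X ω}.indicator (fun ω => k (Y ω)) ω) :=
      ((hk.measurable.comp hY).indicator (measurableSet_le measurable_const hX)).ennreal_ofReal
    simp_rw [key]
    rw [lintegral_add_right _ hmeas, lintegral_add_right _ hmeas]
    exact add_le_add ih (lintegral_step_le P M X Y hX hY hPM g k hk hk0)

/-- By supermodularity the increments of `H · y` grow with `y`, so every jump of some `H · y` is a
jump of `H · n` for a natural number `n ≥ y`. Together with the rationals, these countably many
points approximate every value `H x y` from the left, with a set independent of `y`. -/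
theorem exists_countable_approx (H : ℝ → ℝ → ℝ) (hx : ∀ y, Monotone fun x => H x y)
    (hs : ∀ x x' y y', x ≤ x' → y ≤ y' → H x y' + H x' y ≤ H x' y' + H x y) :
    ∃ D : Set ℝ, D.Countable ∧ D.Nonempty ∧
      ∀ x y ε, 0 < ε → ∃ d ∈ D, d ≤ x ∧ H x y - ε < H d y := by
  refine ⟨range ((↑) : ℚ → ℝ) ∪ ⋃ n : ℕ, {x | ¬ ContinuousAt (fun x => H x n) x},
    (countable_range _).union (countable_iUnion fun n => (hx n).countable_not_continuousAt),
    ⟨_, Or.inl ⟨0, rfl⟩⟩, fun x y ε hε => ?_⟩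
  by_cases hxD : x ∈ ⋃ n : ℕ, {x | ¬ ContinuousAt (fun x => H x n) x}
  · exact ⟨x, Or.inr hxD, le_rfl, by linarith⟩
  · obtain ⟨n, hn⟩ := exists_nat_ge y
    have hc : ContinuousAt (fun x => H x n) x := by
      by_contra h
      exact hxD (mem_iUnion.2 ⟨n, h⟩)
    have hev : ∀ᶠ z in nhds x, H x n - ε < H z n :=
      hc.eventually (lt_mem_nhds (by simp only; linarith))
    obtain ⟨δ, hδ, hball⟩ := Metric.eventually_nhds_iff.1 hev
    obtain ⟨q, hq1, hq2⟩ := exists_rat_btwn (show x - δ < x by linarith)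
    refine ⟨q, Or.inl ⟨q, rfl⟩, hq2.le, ?_⟩
    have h1 := hball (y := q) (by rw [Real.dist_eq, abs_lt]; constructor <;> linarith)
    -- the increment of `H · y` over `[q, x]` is at most that of `H · n`
    have h2 := hs q x y n hq2.le hn
    linarith

/-- Domination on products of upper sets implies domination of the integrals of nonnegative
supermodular functions that are monotone in each variable; no continuity is assumed. -/
theorem lintegral_orthant_le {Ω : Type*} [MeasurableSpace Ω] (P M : Measure Ω) (X Y : Ω → ℝ)
    (hX : Measurable X) (hY : Measurable Y)
    (hPM : ∀ A B : Set ℝ, IsUpperSet A → IsUpperSet B →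
      P (X ⁻¹' A ∩ Y ⁻¹' B) ≤ M (X ⁻¹' A ∩ Y ⁻¹' B))
    (H : ℝ → ℝ → ℝ) (h0 : ∀ x y, 0 ≤ H x y) (hx : ∀ y, Monotone fun x => H x y)
    (hy : ∀ x, Monotone (H x))
    (hs : ∀ x x' y y', x ≤ x' → y ≤ y' → H x y' + H x' y ≤ H x' y' + H x y) :
    ∫⁻ ω, ENNReal.ofReal (H (X ω) (Y ω)) ∂P ≤ ∫⁻ ω, ENNReal.ofReal (H (X ω) (Y ω)) ∂M := by
  obtain ⟨D, hDc, hDne, hD⟩ := exists_countable_approx H hx hs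
  obtain ⟨e, rfl⟩ := hDc.exists_eq_range hDne
  set F : ℕ → Ω → ℝ≥0∞ := fun n ω => ((Finset.range n).image e).sup
    (fun d => if d ≤ X ω then ENNReal.ofReal (H d (Y ω)) else 0) with hF
  have hsup : ∀ ω, ENNReal.ofReal (H (X ω) (Y ω)) = ⨆ n, F n ω := by
    intro ω
    refine le_antisymm ?_ (iSup_le fun n => Finset.sup_le fun d _ => ?_)
    · refine ENNReal.le_of_forall_pos_le_add fun ε hε _ => ?_
      obtain ⟨_, ⟨n, rfl⟩, hdx, hd⟩ := hD (X ω) (Y ω) ε hε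
      have h1 : ENNReal.ofReal (H (e n) (Y ω)) ≤ ⨆ n, F n ω := by
        refine le_trans ?_ (le_iSup (fun n => F n ω) (n + 1))
        refine le_trans ?_ (Finset.le_sup (b := e n)
          (Finset.mem_image_of_mem e (Finset.self_mem_range_succ n)))
        rw [if_pos hdx]
      calc ENNReal.ofReal (H (X ω) (Y ω)) ≤ ENNReal.ofReal (H (e n) (Y ω) + ε) :=
            ENNReal.ofReal_le_ofReal (by linarith)
        _ = ENNReal.ofReal (H (e n) (Y ω)) + ε := by
            rw [ENNReal.ofReal_add (h0 _ _) ε.coe_nonneg, ENNReal.ofReal_coe_nnreal]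
        _ ≤ _ := by gcongr
    · split_ifs with h
      · exact ENNReal.ofReal_le_ofReal (hx _ h)
      · exact zero_le
  have hmeas : ∀ n, Measurable (F n) := by
    intro n
    simp only [hF]
    induction (Finset.range n).image e using Finset.induction_on with
    | empty => simp
    | insert d S _ ih =>
      simp only [Finset.sup_insert]
      exact (Measurable.ite (measurableSet_le measurable_const hX)
        ((hy d).measurable.comp hY).ennreal_ofReal measurable_const).sup ih
  have hmono : Monotone F := fun m n hmn ω =>
    Finset.sup_mono (Finset.image_subset_image (Finset.range_mono hmn))
  simp_rw [hsup]
  rw [lintegral_iSup hmeas hmono, lintegral_iSup hmeas hmono]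
  exact iSup_mono fun n => lintegral_grid_le P M X Y hX hY hPM H h0 hx hy hs _

/-- The mixed second difference of `c` based at `(x₀, y₀)`. -/
def mixedDiff (c : ℝ × ℝ → ℝ) (x₀ y₀ x y : ℝ) : ℝ :=
  c (x, y) - c (x₀, y) - c (x, y₀) + c (x₀, y₀)

theorem lintegral_quadrant_le {Ω : Type*} [MeasurableSpace Ω] (P M : Measure Ω) (X Y : Ω → ℝ)
    (hX : Measurable X) (hY : Measurable Y)
    (hPM : ∀ A B : Set ℝ, IsUpperSet A → IsUpperSet B →
      P (X ⁻¹' A ∩ Y ⁻¹' B) ≤ M (X ⁻¹' A ∩ Y ⁻¹' B))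
    (c : ℝ × ℝ → ℝ)
    (hs : ∀ x x' y y', x ≤ x' → y ≤ y' → c (x, y') + c (x', y) ≤ c (x', y') + c (x, y))
    (x₀ y₀ : ℝ) :
    ∫⁻ ω, ENNReal.ofReal (mixedDiff c x₀ y₀ (max (X ω) x₀) (max (Y ω) y₀)) ∂P ≤
      ∫⁻ ω, ENNReal.ofReal (mixedDiff c x₀ y₀ (max (X ω) x₀) (max (Y ω) y₀)) ∂M := by
  refine lintegral_orthant_le P M X Y hX hY hPM
    (fun x y => mixedDiff c x₀ y₀ (max x x₀) (max y y₀)) ?_ ?_ ?_ ?_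
  · intro x y
    have := hs x₀ (max x x₀) y₀ (max y y₀) (le_max_right _ _) (le_max_right _ _)
    simp only [mixedDiff]
    linarith
  · intro y x x' h
    have := hs (max x x₀) (max x' x₀) y₀ (max y y₀) (max_le_max_right _ h) (le_max_right _ _)
    simp only [mixedDiff]
    linarith
  · intro x y y' h
    have := hs x₀ (max x x₀) (max y y₀) (max y' y₀) (le_max_right _ _) (max_le_max_right _ h)
    simp only [mixedDiff]
    linarith
  · intro x x' y y' h h'
    have := hs _ _ _ _ (max_le_max_right x₀ h) (max_le_max_right y₀ h')
    simp only [mixedDiff]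
    linarith

/-! ### Expectations of sums with given marginals -/

/-- Truncation of a real number to `[-n, n]`. -/
def clamp (n : ℕ) (t : ℝ) : ℝ := max (-n) (min n t)

theorem clamp_bounds (n : ℕ) (t : ℝ) : -(n : ℝ) ≤ clamp n t ∧ clamp n t ≤ n := by
  have : (0 : ℝ) ≤ n := n.cast_nonneg
  exact ⟨le_max_left _ _, max_le (by linarith) (min_le_left _ _)⟩

theorem measurable_clamp (n : ℕ) : Measurable (clamp n) :=
  measurable_const.max (measurable_const.min measurable_id)

theorem clamp_of_abs_le {n : ℕ} {t : ℝ} (h : |t| ≤ n) : clamp n t = t := by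
  rw [abs_le] at h
  rw [clamp, min_eq_right h.2, max_eq_right h.1]

/-- Since `clamp n` is odd, monotone and `1`-Lipschitz, the positive part of a sum of
truncations is at most that of the sum; oddness gives the same for negative parts. -/
theorem clamp_add_le (n : ℕ) (s t : ℝ) : max (clamp n s + clamp n t) 0 ≤ max (s + t) 0 := by
  have : (0 : ℝ) ≤ n := n.cast_nonneg
  simp only [clamp]
  grind

theorem clamp_neg (n : ℕ) (t : ℝ) : clamp n (-t) = - clamp n t := by
  have : (0 : ℝ) ≤ n := n.cast_nonneg
  simp only [clamp]
  grind

theorem tendsto_clamp_add (s t : ℝ) :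
    Tendsto (fun n : ℕ => clamp n s + clamp n t) atTop (𝓝 (s + t)) := by
  refine tendsto_const_nhds.congr' ?_
  obtain ⟨N, hN⟩ := exists_nat_ge (max |s| |t|)
  filter_upwards [eventually_ge_atTop N] with n hn
  have hn' : (N : ℝ) ≤ n := by exact_mod_cast hn
  rw [clamp_of_abs_le ((le_max_left _ _).trans (hN.trans hn')),
    clamp_of_abs_le ((le_max_right _ _).trans (hN.trans hn'))]

theorem integrable_clamp_comp {Ω : Type*} [MeasurableSpace Ω] (P : Measure Ω) [IsFiniteMeasure P]
    (n : ℕ) {f : Ω → ℝ} (hf : Measurable f) : Integrable (fun ω => clamp n (f ω)) P :=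
  Integrable.of_bound ((measurable_clamp n).comp hf).aestronglyMeasurable n
    (ae_of_all _ fun ω => abs_le.2 (clamp_bounds n (f ω)))

theorem integral_clamp_add_eq (P Q : Measure (ℝ × ℝ)) [IsFiniteMeasure P] [IsFiniteMeasure Q]
    (h1 : P.map Prod.fst = Q.map Prod.fst) (h2 : P.map Prod.snd = Q.map Prod.snd)
    {a b : ℝ → ℝ} (ha : Measurable a) (hb : Measurable b) (n : ℕ) :
    ∫ p, clamp n (a p.1) + clamp n (b p.2) ∂P = ∫ p, clamp n (a p.1) + clamp n (b p.2) ∂Q := by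
  have hA : Measurable fun x => clamp n (a x) := (measurable_clamp n).comp ha
  have hB : Measurable fun x => clamp n (b x) := (measurable_clamp n).comp hb
  have key : ∀ ρ : Measure (ℝ × ℝ), IsFiniteMeasure ρ →
      ∫ p, clamp n (a p.1) + clamp n (b p.2) ∂ρ =
        ∫ x, clamp n (a x) ∂(ρ.map Prod.fst) + ∫ y, clamp n (b y) ∂(ρ.map Prod.snd) := by
    intro ρ _
    rw [integral_map measurable_fst.aemeasurable hA.aestronglyMeasurable,
      integral_map measurable_snd.aemeasurable hB.aestronglyMeasurable]
    exact integral_add (integrable_clamp_comp ρ n (ha.comp measurable_fst))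
      (integrable_clamp_comp ρ n (hb.comp measurable_snd))
  rw [key P inferInstance, key Q inferInstance, h1, h2]

/-- The expectation of `a(X) + b(Y)`, when it exists, is determined by the marginals, even if
`a(X)` and `b(Y)` are not separately integrable. -/
theorem integral_sum_eq (P Q : Measure (ℝ × ℝ)) [IsFiniteMeasure P] [IsFiniteMeasure Q]
    (h1 : P.map Prod.fst = Q.map Prod.fst) (h2 : P.map Prod.snd = Q.map Prod.snd)
    {a b : ℝ → ℝ} (ha : Measurable a) (hb : Measurable b)
    (hP : Integrable (fun p : ℝ × ℝ => a p.1 + b p.2) P)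
    (hQ : Integrable (fun p : ℝ × ℝ => a p.1 + b p.2) Q) :
    ∫ p, a p.1 + b p.2 ∂P = ∫ p, a p.1 + b p.2 ∂Q := by
  have key : ∀ ρ : Measure (ℝ × ℝ), IsFiniteMeasure ρ →
      Integrable (fun p : ℝ × ℝ => a p.1 + b p.2) ρ →
      Tendsto (fun n : ℕ => ∫ p, clamp n (a p.1) + clamp n (b p.2) ∂ρ) atTop
        (𝓝 (∫ p, a p.1 + b p.2 ∂ρ)) := by
    intro ρ _ hR
    refine tendsto_integral_of_dominated_convergence (fun p => |a p.1 + b p.2|)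
      (fun n => ?_) hR.abs (fun n => ae_of_all _ fun p => ?_)
      (ae_of_all _ fun p => tendsto_clamp_add _ _)
    · exact ((integrable_clamp_comp ρ n (ha.comp measurable_fst)).add
        (integrable_clamp_comp ρ n (hb.comp measurable_snd))).aestronglyMeasurable
    · have e1 := clamp_add_le n (a p.1) (b p.2)
      have e2 := clamp_add_le n (-a p.1) (-b p.2)
      rw [clamp_neg, clamp_neg] at e2
      rw [Real.norm_eq_abs]
      grind
  refine tendsto_nhds_unique (key P inferInstance hP) ?_
  simp_rw [integral_clamp_add_eq P Q h1 h2 ha hb]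
  exact key Q inferInstance hQ

/-- If `a(X) + b(Y)` has integrable positive part under `M` and integrable negative part under
another coupling `N` of the same marginals, its negative part is integrable under `M` too. -/
theorem lintegral_neg_sum_lt_top (M N : Measure (ℝ × ℝ)) [IsFiniteMeasure M] [IsFiniteMeasure N]
    (h1 : M.map Prod.fst = N.map Prod.fst) (h2 : M.map Prod.snd = N.map Prod.snd)
    {a b : ℝ → ℝ} (ha : Measurable a) (hb : Measurable b)
    (hM : ∫⁻ p, ENNReal.ofReal (a p.1 + b p.2) ∂M < ∞)
    (hN : ∫⁻ p, ENNReal.ofReal (-(a p.1 + b p.2)) ∂N < ∞) :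
    ∫⁻ p, ENNReal.ofReal (-(a p.1 + b p.2)) ∂M < ∞ := by
  set s : ℕ → ℝ × ℝ → ℝ := fun n p => clamp n (a p.1) + clamp n (b p.2) with hs
  have hsm : ∀ n, Measurable (s n) := fun n =>
    ((measurable_clamp n).comp (ha.comp measurable_fst)).add
      ((measurable_clamp n).comp (hb.comp measurable_snd))
  have hsint : ∀ (ρ : Measure (ℝ × ℝ)) [IsFiniteMeasure ρ] n, Integrable (s n) ρ :=
    fun ρ _ n => (integrable_clamp_comp ρ n (ha.comp measurable_fst)).add
      (integrable_clamp_comp ρ n (hb.comp measurable_snd))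
  have hpos : ∀ n p, ENNReal.ofReal (s n p) ≤ ENNReal.ofReal (a p.1 + b p.2) := by
    intro n p
    have := clamp_add_le n (a p.1) (b p.2)
    simp only [ENNReal.ofReal, hs]
    exact_mod_cast this
  have hneg : ∀ n p, ENNReal.ofReal (-s n p) ≤ ENNReal.ofReal (-(a p.1 + b p.2)) := by
    intro n p
    have := clamp_add_le n (-a p.1) (-b p.2)
    rw [clamp_neg, clamp_neg, ← neg_add, ← neg_add] at this
    simp only [ENNReal.ofReal, hs]
    exact_mod_cast this
  set A := ∫⁻ p, ENNReal.ofReal (a p.1 + b p.2) ∂M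
  set B := ∫⁻ p, ENNReal.ofReal (-(a p.1 + b p.2)) ∂N
  have hbound : ∀ n, ∫⁻ p, ENNReal.ofReal (-s n p) ∂M ≤ A + B := by
    intro n
    have eM := integral_eq_lintegral_pos_part_sub_lintegral_neg_part (hsint M n)
    have eN := integral_eq_lintegral_pos_part_sub_lintegral_neg_part (hsint N n)
    have eMN : ∫ p, s n p ∂M = ∫ p, s n p ∂N := integral_clamp_add_eq M N h1 h2 ha hb n
    have l1 : (∫⁻ p, ENNReal.ofReal (s n p) ∂M).toReal ≤ A.toReal :=
      ENNReal.toReal_mono hM.ne (lintegral_mono (hpos n))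
    have l2 : (∫⁻ p, ENNReal.ofReal (-s n p) ∂N).toReal ≤ B.toReal :=
      ENNReal.toReal_mono hN.ne (lintegral_mono (hneg n))
    have l3 : 0 ≤ (∫⁻ p, ENNReal.ofReal (s n p) ∂N).toReal := ENNReal.toReal_nonneg
    have hfin : ∫⁻ p, ENNReal.ofReal (-s n p) ∂M ≠ ∞ := (hsint M n).neg.lintegral_lt_top.ne
    rw [← ENNReal.toReal_le_toReal hfin (ENNReal.add_lt_top.2 ⟨hM, hN⟩).ne,
      ENNReal.toReal_add hM.ne hN.ne]
    linarith
  have hlim : ∀ p : ℝ × ℝ, ENNReal.ofReal (-(a p.1 + b p.2)) =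
      liminf (fun n => ENNReal.ofReal (-s n p)) atTop := fun p =>
    ((ENNReal.continuous_ofReal.tendsto _).comp
      (tendsto_clamp_add (a p.1) (b p.2)).neg).liminf_eq.symm
  refine lt_of_le_of_lt ?_ (ENNReal.add_lt_top.2 ⟨hM, hN⟩)
  simp_rw [hlim]
  refine (lintegral_liminf_le fun n => (hsm n).neg.ennreal_ofReal).trans ?_
  refine (liminf_le_liminf (Eventually.of_forall hbound)).trans ?_
  simp [A, B]

theorem integrable_of_lintegral_pos_neg {Ω : Type*} [MeasurableSpace Ω] {P : Measure Ω}
    {f : Ω → ℝ} (hf : Measurable f) (h1 : ∫⁻ ω, ENNReal.ofReal (f ω) ∂P < ∞)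
    (h2 : ∫⁻ ω, ENNReal.ofReal (-f ω) ∂P < ∞) : Integrable f P := by
  refine ⟨hf.aestronglyMeasurable, ?_⟩
  refine lt_of_le_of_lt ?_ (ENNReal.add_lt_top.2 ⟨h1, h2⟩)
  rw [← lintegral_add_left hf.ennreal_ofReal]
  refine lintegral_mono fun ω => ?_
  rw [Real.enorm_eq_ofReal_abs]
  rcases le_total 0 (f ω) with h | h
  · rw [abs_of_nonneg h]
    exact le_self_add
  · rw [abs_of_nonpos h]
    exact le_add_self

/-- Positive part integrable under one coupling and negative part under another: then `a(X) + b(Y)`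
is integrable under both. -/
theorem integrable_sum (M N : Measure (ℝ × ℝ)) [IsFiniteMeasure M] [IsFiniteMeasure N]
    (h1 : M.map Prod.fst = N.map Prod.fst) (h2 : M.map Prod.snd = N.map Prod.snd)
    {a b : ℝ → ℝ} (ha : Measurable a) (hb : Measurable b)
    (hM : ∫⁻ p, ENNReal.ofReal (a p.1 + b p.2) ∂M < ∞)
    (hN : ∫⁻ p, ENNReal.ofReal (-(a p.1 + b p.2)) ∂N < ∞) :
    Integrable (fun p : ℝ × ℝ => a p.1 + b p.2) M ∧
      Integrable (fun p : ℝ × ℝ => a p.1 + b p.2) N := by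
  have hm : Measurable fun p : ℝ × ℝ => a p.1 + b p.2 :=
    (ha.comp measurable_fst).add (hb.comp measurable_snd)
  refine ⟨integrable_of_lintegral_pos_neg hm hM
    (lintegral_neg_sum_lt_top M N h1 h2 ha hb hM hN), integrable_of_lintegral_pos_neg hm ?_ hN⟩
  have := lintegral_neg_sum_lt_top N M h1.symm h2.symm ha.neg hb.neg
    (by simpa only [Pi.neg_apply, neg_add] using hN)
    (by simpa only [Pi.neg_apply, neg_add, neg_neg] using hM)
  simpa only [Pi.neg_apply, neg_add, neg_neg] using this

/-! ### Reduction to abstract couplings -/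

/-- The mixed difference is positive only on the upper right and lower left quadrants, and it
vanishes on the two axes through `(x₀, y₀)`. -/
theorem ofReal_mixedDiff_split (c : ℝ × ℝ → ℝ)
    (hs : ∀ x x' y y', x ≤ x' → y ≤ y' → c (x, y') + c (x', y) ≤ c (x', y') + c (x, y))
    (x₀ y₀ x y : ℝ) :
    ENNReal.ofReal (mixedDiff c x₀ y₀ x y) =
      ENNReal.ofReal (mixedDiff c x₀ y₀ (max x x₀) (max y y₀)) +
        ENNReal.ofReal (mixedDiff c x₀ y₀ (min x x₀) (min y y₀)) := by
  have e1 : ∀ y, mixedDiff c x₀ y₀ x₀ y = 0 := fun y => by simp only [mixedDiff]; ring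
  have e2 : ∀ x, mixedDiff c x₀ y₀ x y₀ = 0 := fun x => by simp only [mixedDiff]; ring
  rcases le_total x x₀ with h | h <;> rcases le_total y y₀ with h' | h'
  · simp [h, h', e1]
  · have : mixedDiff c x₀ y₀ x y ≤ 0 := by
      have := hs x x₀ y₀ y h h'
      simp only [mixedDiff]
      linarith
    simp [h, h', e1, e2, ENNReal.ofReal_of_nonpos this]
  · have : mixedDiff c x₀ y₀ x y ≤ 0 := by
      have := hs x₀ x y y₀ h h'
      simp only [mixedDiff]
      linarith
    simp [h, h', e1, e2, ENNReal.ofReal_of_nonpos this]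
  · simp [h, h', e1]

/-- Comparison of the positive parts of the mixed difference. The second coordinate is an arbitrary
function `Y` so that the lemma also applies to the reflected variable `-y`. -/
theorem lintegral_mixedDiff_le (P M : Measure (ℝ × ℝ)) (c : ℝ × ℝ → ℝ) (hc : Measurable c)
    (hs : ∀ x x' y y', x ≤ x' → y ≤ y' → c (x, y') + c (x', y) ≤ c (x', y') + c (x, y))
    (x₀ y₀ : ℝ) (Y : ℝ × ℝ → ℝ) (hY : Measurable Y)
    (hU : ∀ A B : Set ℝ, IsUpperSet A → IsUpperSet B →
      P (Prod.fst ⁻¹' A ∩ Y ⁻¹' B) ≤ M (Prod.fst ⁻¹' A ∩ Y ⁻¹' B))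
    (hL : ∀ A B : Set ℝ, IsLowerSet A → IsLowerSet B →
      P (Prod.fst ⁻¹' A ∩ Y ⁻¹' B) ≤ M (Prod.fst ⁻¹' A ∩ Y ⁻¹' B)) :
    ∫⁻ p, ENNReal.ofReal (mixedDiff c x₀ y₀ p.1 (Y p)) ∂P ≤
      ∫⁻ p, ENNReal.ofReal (mixedDiff c x₀ y₀ p.1 (Y p)) ∂M := by
  have hlow : ∫⁻ p, ENNReal.ofReal (mixedDiff c x₀ y₀ (min p.1 x₀) (min (Y p) y₀)) ∂P ≤
      ∫⁻ p, ENNReal.ofReal (mixedDiff c x₀ y₀ (min p.1 x₀) (min (Y p) y₀)) ∂M := by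
    -- the point reflection exchanges the lower left and the upper right quadrant
    have := lintegral_quadrant_le P M (fun p => -p.1) (fun p => -Y p) measurable_fst.neg hY.neg
      (fun A B hA hB => hL (-A) (-B) hA.neg hB.neg) (fun p => c (-p.1, -p.2))
      (fun x x' y y' h h' => by
        have := hs (-x') (-x) (-y') (-y) (neg_le_neg h) (neg_le_neg h')
        simp only
        linarith) (-x₀) (-y₀)
    simp only [mixedDiff, max_neg_neg, neg_neg] at this ⊢
    exact this
  have hup := lintegral_quadrant_le P M Prod.fst Y measurable_fst hY hU c hs x₀ y₀
  have hm : Measurable fun p : ℝ × ℝ =>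
      ENNReal.ofReal (mixedDiff c x₀ y₀ (max p.1 x₀) (max (Y p) y₀)) := by
    unfold mixedDiff
    fun_prop
  rw [lintegral_congr fun p => ofReal_mixedDiff_split c hs x₀ y₀ p.1 (Y p),
    lintegral_congr fun p => ofReal_mixedDiff_split c hs x₀ y₀ p.1 (Y p),
    lintegral_add_left hm, lintegral_add_left hm]
  exact add_le_add hup hlow

/-- The two bounds for abstract couplings: `M` dominates `P` on products of rays of equal
orientation, `N` dominates `P` on products of rays of opposite orientation, and the quadrants at
`(x₀, y₀)` carrying `M` and `N` are those on which the mixed difference is `≥ 0`, resp. `≤ 0`. -/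
theorem expectation_bounds_of_couplings (P M N : Measure (ℝ × ℝ))
    [IsFiniteMeasure P] [IsFiniteMeasure M] [IsFiniteMeasure N]
    (c : ℝ × ℝ → ℝ) (hc : Measurable c)
    (hs : ∀ x x' y y', x ≤ x' → y ≤ y' → c (x, y') + c (x', y) ≤ c (x', y') + c (x, y))
    (x₀ y₀ : ℝ)
    (hM1 : M.map Prod.fst = P.map Prod.fst) (hM2 : M.map Prod.snd = P.map Prod.snd)
    (hN1 : N.map Prod.fst = P.map Prod.fst) (hN2 : N.map Prod.snd = P.map Prod.snd)
    (hUU : ∀ A B : Set ℝ, IsUpperSet A → IsUpperSet B → P (A ×ˢ B) ≤ M (A ×ˢ B))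
    (hLL : ∀ A B : Set ℝ, IsLowerSet A → IsLowerSet B → P (A ×ˢ B) ≤ M (A ×ˢ B))
    (hUL : ∀ A B : Set ℝ, IsUpperSet A → IsLowerSet B → P (A ×ˢ B) ≤ N (A ×ˢ B))
    (hLU : ∀ A B : Set ℝ, IsLowerSet A → IsUpperSet B → P (A ×ˢ B) ≤ N (A ×ˢ B))
    (hMq : ∀ᵐ p ∂M, (x₀ ≤ p.1 ∧ y₀ ≤ p.2) ∨ (p.1 ≤ x₀ ∧ p.2 ≤ y₀))
    (hNq : ∀ᵐ p ∂N, (x₀ ≤ p.1 ∧ p.2 ≤ y₀) ∨ (p.1 ≤ x₀ ∧ y₀ ≤ p.2))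
    (hP : Integrable c P) (hM : Integrable c M) (hN : Integrable c N) :
    ∫ p, c p ∂N ≤ ∫ p, c p ∂P ∧ ∫ p, c p ∂P ≤ ∫ p, c p ∂M := by
  set a : ℝ → ℝ := fun x => c (x, y₀) with ha
  set b : ℝ → ℝ := fun y => c (x₀, y) - c (x₀, y₀) with hb
  set G : ℝ × ℝ → ℝ := fun p => mixedDiff c x₀ y₀ p.1 p.2 with hG
  have ham : Measurable a := by fun_prop
  have hbm : Measurable b := by fun_prop
  have hGm : Measurable G := by
    simp only [hG, mixedDiff]
    fun_prop
  have hcG : ∀ p, c p = (a p.1 + b p.2) + G p := fun p => by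
    simp only [ha, hb, hG, mixedDiff]
    ring
  have hGM : ∀ᵐ p ∂M, 0 ≤ G p := by
    filter_upwards [hMq] with p hp
    simp only [hG, mixedDiff]
    rcases hp with ⟨h, h'⟩ | ⟨h, h'⟩
    · linarith [hs _ _ _ _ h h']
    · linarith [hs _ _ _ _ h h']
  have hGN : ∀ᵐ p ∂N, G p ≤ 0 := by
    filter_upwards [hNq] with p hp
    simp only [hG, mixedDiff]
    rcases hp with ⟨h, h'⟩ | ⟨h, h'⟩
    · linarith [hs _ _ _ _ h h']
    · linarith [hs _ _ _ _ h h']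
  have hSM : ∫⁻ p, ENNReal.ofReal (a p.1 + b p.2) ∂M < ∞ := by
    refine lt_of_le_of_lt (lintegral_mono_ae ?_) hM.lintegral_lt_top
    filter_upwards [hGM] with p hp
    exact ENNReal.ofReal_le_ofReal (by linarith [hcG p])
  have hSN : ∫⁻ p, ENNReal.ofReal (-(a p.1 + b p.2)) ∂N < ∞ := by
    refine lt_of_le_of_lt (lintegral_mono_ae ?_) hN.neg.lintegral_lt_top
    filter_upwards [hGN] with p hp
    exact ENNReal.ofReal_le_ofReal (by simp only [Pi.neg_apply]; linarith [hcG p])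
  obtain ⟨hSMi, hSNi⟩ := integrable_sum M N (hM1.trans hN1.symm) (hM2.trans hN2.symm)
    ham hbm hSM hSN
  have hGeq : ∀ p, c p - (a p.1 + b p.2) = G p := fun p => by rw [hcG p]; ring
  have hGMi : Integrable G M := (hM.sub hSMi).congr (ae_of_all _ hGeq)
  have hGNi : Integrable G N := (hN.sub hSNi).congr (ae_of_all _ hGeq)
  have hpos : ∫⁻ p, ENNReal.ofReal (G p) ∂P ≤ ∫⁻ p, ENNReal.ofReal (G p) ∂M :=
    lintegral_mixedDiff_le P M c hc hs x₀ y₀ Prod.snd measurable_snd hUU hLL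
  have hneg : ∫⁻ p, ENNReal.ofReal (-G p) ∂P ≤ ∫⁻ p, ENNReal.ofReal (-G p) ∂N := by
    -- `(x, y) ↦ -c (x, -y)` is again supermodular
    have := lintegral_mixedDiff_le P N (fun p => -c (p.1, -p.2)) (by fun_prop)
      (fun x x' y y' h h' => by
        have := hs x x' (-y') (-y) h (neg_le_neg h')
        simp only
        linarith) x₀ (-y₀) (fun p => -p.2) measurable_snd.neg
      (fun A B hA hB => hUL A (-B) hA hB.neg) (fun A B hA hB => hLU A (-B) hA hB.neg)
    have e : ∀ p : ℝ × ℝ, mixedDiff (fun p => -c (p.1, -p.2)) x₀ (-y₀) p.1 (-p.2) = -G p := by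
      intro p
      simp only [mixedDiff, neg_neg, hG]
      ring
    simpa only [e] using this
  have hGPi : Integrable G P := integrable_of_lintegral_pos_neg hGm
    (hpos.trans_lt hGMi.lintegral_lt_top) (hneg.trans_lt hGNi.neg.lintegral_lt_top)
  have hSPi : Integrable (fun p : ℝ × ℝ => a p.1 + b p.2) P :=
    (hP.sub hGPi).congr (ae_of_all _ fun p => by simp only [Pi.sub_apply]; linarith [hcG p])
  have eM : ∫ p, a p.1 + b p.2 ∂M = ∫ p, a p.1 + b p.2 ∂P :=
    integral_sum_eq M P hM1 hM2 ham hbm hSMi hSPi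
  have eN : ∫ p, a p.1 + b p.2 ∂N = ∫ p, a p.1 + b p.2 ∂P :=
    integral_sum_eq N P hN1 hN2 ham hbm hSNi hSPi
  have hM0 : ∫⁻ p, ENNReal.ofReal (-G p) ∂M = 0 := by
    rw [lintegral_eq_zero_iff (f := fun p => ENNReal.ofReal (-G p)) hGm.neg.ennreal_ofReal]
    filter_upwards [hGM] with p hp
    simpa using hp
  have hN0 : ∫⁻ p, ENNReal.ofReal (G p) ∂N = 0 := by
    rw [lintegral_eq_zero_iff hGm.ennreal_ofReal]
    filter_upwards [hGN] with p hp
    simpa using hp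
  have iP := integral_eq_lintegral_pos_part_sub_lintegral_neg_part hGPi
  have iM := integral_eq_lintegral_pos_part_sub_lintegral_neg_part hGMi
  have iN := integral_eq_lintegral_pos_part_sub_lintegral_neg_part hGNi
  rw [hM0, ENNReal.toReal_zero] at iM
  rw [hN0, ENNReal.toReal_zero] at iN
  have l1 := ENNReal.toReal_mono hGMi.lintegral_lt_top.ne hpos
  have l2 : (∫⁻ p, ENNReal.ofReal (-G p) ∂P).toReal ≤ (∫⁻ p, ENNReal.ofReal (-G p) ∂N).toReal :=
    ENNReal.toReal_mono hGNi.neg.lintegral_lt_top.ne hneg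
  have l3 : 0 ≤ (∫⁻ p, ENNReal.ofReal (G p) ∂P).toReal := ENNReal.toReal_nonneg
  have l4 : 0 ≤ (∫⁻ p, ENNReal.ofReal (-G p) ∂P).toReal := ENNReal.toReal_nonneg
  have cP : ∫ p, c p ∂P = ∫ p, a p.1 + b p.2 ∂P + ∫ p, G p ∂P := by
    rw [← integral_add hSPi hGPi]
    exact integral_congr_ae (ae_of_all _ hcG)
  have cM : ∫ p, c p ∂M = ∫ p, a p.1 + b p.2 ∂M + ∫ p, G p ∂M := by
    rw [← integral_add hSMi hGMi]
    exact integral_congr_ae (ae_of_all _ hcG)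
  have cN : ∫ p, c p ∂N = ∫ p, a p.1 + b p.2 ∂N + ∫ p, G p ∂N := by
    rw [← integral_add hSNi hGNi]
    exact integral_congr_ae (ae_of_all _ hcG)
  constructor <;> linarith

/-! ### Quantile functions and the extremal couplings -/

theorem quantile_le_iff_s2 (ν : Measure ℝ) [IsProbabilityMeasure ν] (F Q : ℝ → ℝ)
    (hF : ∀ x, F x = (ν (Iic x)).toReal) (hQ : ∀ u, Q u = sInf {x : ℝ | u ≤ F x})
    {u : ℝ} (hu : u ∈ Ioo (0 : ℝ) 1) (x : ℝ) : Q u ≤ x ↔ u ≤ F x := by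
  have hFc : F = ProbabilityTheory.cdf ν := by
    funext x
    rw [hF, ProbabilityTheory.cdf_eq_real, measureReal_def]
  have hmono : Monotone F := hFc ▸ ProbabilityTheory.monotone_cdf ν
  have hne : {x : ℝ | u ≤ F x}.Nonempty := by
    have h := ProbabilityTheory.tendsto_cdf_atTop ν
    rw [← hFc] at h
    obtain ⟨x, hx⟩ := (h.eventually (lt_mem_nhds hu.2)).exists
    exact ⟨x, hx.le⟩
  have hbdd : BddBelow {x : ℝ | u ≤ F x} := by
    have h := ProbabilityTheory.tendsto_cdf_atBot ν
    rw [← hFc] at h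
    obtain ⟨z, hz⟩ := (h.eventually (gt_mem_nhds hu.1)).exists
    refine ⟨z, fun x hx => ?_⟩
    by_contra hlt
    exact absurd (hmono (not_le.1 hlt).le) (not_le.2 (hz.trans_le hx))
  rw [hQ]
  refine ⟨fun h => ?_, fun h => csInf_le hbdd h⟩
  -- the infimum is attained because `F` is right-continuous
  have hlim : Tendsto F (𝓝[>] x) (𝓝 (F x)) := by
    rw [hFc]
    exact ((ProbabilityTheory.cdf ν).right_continuous x).mono_left
      (nhdsWithin_mono _ Ioi_subset_Ici_self)
  refine ge_of_tendsto hlim ?_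
  filter_upwards [self_mem_nhdsWithin] with z hz
  obtain ⟨w, hw, hwz⟩ := exists_lt_of_csInf_lt hne (lt_of_le_of_lt h hz)
  exact le_trans hw (hmono hwz.le)

theorem quantile_monotoneOn (ν : Measure ℝ) [IsProbabilityMeasure ν] (F Q : ℝ → ℝ)
    (hF : ∀ x, F x = (ν (Iic x)).toReal) (hQ : ∀ u, Q u = sInf {x : ℝ | u ≤ F x}) :
    MonotoneOn Q (Ioo (0 : ℝ) 1) := fun _ hu _ hv huv =>
  (quantile_le_iff_s2 ν F Q hF hQ hu _).2
    (huv.trans ((quantile_le_iff_s2 ν F Q hF hQ hv _).1 le_rfl))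

theorem map_quantile_s2 (ν : Measure ℝ) [IsProbabilityMeasure ν] (F Q : ℝ → ℝ)
    (hF : ∀ x, F x = (ν (Iic x)).toReal) (hQ : ∀ u, Q u = sInf {x : ℝ | u ≤ F x}) :
    (volume.restrict (Ioo (0 : ℝ) 1)).map Q = ν := by
  have hae : AEMeasurable Q (volume.restrict (Ioo (0 : ℝ) 1)) :=
    aemeasurable_restrict_of_monotoneOn measurableSet_Ioo (quantile_monotoneOn ν F Q hF hQ)
  symm
  refine Measure.ext_of_Iic _ _ fun x => ?_
  rw [Measure.map_apply_of_aemeasurable hae measurableSet_Iic,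
    Measure.restrict_apply' measurableSet_Ioo]
  have hset : Q ⁻¹' Iic x ∩ Ioo (0 : ℝ) 1 = Iic (F x) ∩ Ioo (0 : ℝ) 1 := by
    ext u
    simp only [mem_inter_iff, mem_preimage, mem_Iic]
    exact and_congr_left fun hu => quantile_le_iff_s2 ν F Q hF hQ hu x
  have hν : ν (Iic x) = ENNReal.ofReal (F x) := by
    rw [hF, ENNReal.ofReal_toReal (measure_ne_top _ _)]
  have hF1 : F x ≤ 1 := by
    rw [hF]
    exact ENNReal.toReal_le_of_le_ofReal zero_le_one (by simpa using prob_le_one)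
  rw [hset, hν]
  refine le_antisymm ?_ ?_
  · calc ENNReal.ofReal (F x) = volume (Ioo 0 (F x)) := by simp
      _ ≤ volume (Iic (F x) ∩ Ioo (0 : ℝ) 1) := measure_mono fun u hu => ⟨hu.2.le, hu.1, hu.2.trans_le hF1⟩
  · calc volume (Iic (F x) ∩ Ioo (0 : ℝ) 1) ≤ volume (Ioc 0 (F x)) :=
          measure_mono fun u hu => ⟨hu.2.1, hu.1⟩
      _ = _ := by simp

/-- If the events `{ξ ∈ A}` and `{η ∈ B}` are nested, then the coupling `(ξ, η)` gives `A × B`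
the largest mass the marginals allow. -/
theorem prod_le_of_nested (P : Measure (ℝ × ℝ)) (ξ η : ℝ → ℝ)
    (hξ : AEMeasurable ξ (volume.restrict (Ioo (0 : ℝ) 1)))
    (hη : AEMeasurable η (volume.restrict (Ioo (0 : ℝ) 1)))
    (h1 : (volume.restrict (Ioo (0 : ℝ) 1)).map ξ = P.map Prod.fst)
    (h2 : (volume.restrict (Ioo (0 : ℝ) 1)).map η = P.map Prod.snd)
    {A B : Set ℝ} (hA : MeasurableSet A) (hB : MeasurableSet B)
    (hAB : (∀ u ∈ Ioo (0 : ℝ) 1, ξ u ∈ A → η u ∈ B) ∨ ∀ u ∈ Ioo (0 : ℝ) 1, η u ∈ B → ξ u ∈ A) :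
    P (A ×ˢ B) ≤ (volume.restrict (Ioo (0 : ℝ) 1)).map (fun u => (ξ u, η u)) (A ×ˢ B) := by
  rw [Measure.map_apply_of_aemeasurable (hξ.prodMk hη) (hA.prod hB)]
  rcases hAB with h | h
  · calc P (A ×ˢ B) ≤ P (Prod.fst ⁻¹' A) := measure_mono fun p hp => hp.1
      _ = volume.restrict (Ioo (0 : ℝ) 1) (ξ ⁻¹' A) := by
          rw [← Measure.map_apply measurable_fst hA, ← h1,
            Measure.map_apply_of_aemeasurable hξ hA]
      _ ≤ _ := by
          rw [Measure.restrict_apply' measurableSet_Ioo, Measure.restrict_apply' measurableSet_Ioo]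
          exact measure_mono fun u hu => ⟨⟨hu.1, h u hu.2 hu.1⟩, hu.2⟩
  · calc P (A ×ˢ B) ≤ P (Prod.snd ⁻¹' B) := measure_mono fun p hp => hp.2
      _ = volume.restrict (Ioo (0 : ℝ) 1) (η ⁻¹' B) := by
          rw [← Measure.map_apply measurable_snd hB, ← h2,
            Measure.map_apply_of_aemeasurable hη hB]
      _ ≤ _ := by
          rw [Measure.restrict_apply' measurableSet_Ioo, Measure.restrict_apply' measurableSet_Ioo]
          exact measure_mono fun u hu => ⟨⟨h u hu.2 hu.1, hu.1⟩, hu.2⟩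

theorem nested_of_upward (I : Set ℝ) (p q : ℝ → Prop)
    (hp : ∀ u ∈ I, ∀ v ∈ I, u ≤ v → p u → p v) (hq : ∀ u ∈ I, ∀ v ∈ I, u ≤ v → q u → q v) :
    (∀ u ∈ I, p u → q u) ∨ ∀ u ∈ I, q u → p u := by
  by_contra! h
  obtain ⟨⟨u, hu, hpu, hqu⟩, v, hv, hqv, hpv⟩ := h
  rcases le_total u v with h | h
  · exact hpv (hp u hu v hv h hpu)
  · exact hqu (hq v hv u hu h hqv)

theorem nested_of_downward (I : Set ℝ) (p q : ℝ → Prop)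
    (hp : ∀ u ∈ I, ∀ v ∈ I, u ≤ v → p v → p u) (hq : ∀ u ∈ I, ∀ v ∈ I, u ≤ v → q v → q u) :
    (∀ u ∈ I, p u → q u) ∨ ∀ u ∈ I, q u → p u := by
  by_contra! h
  obtain ⟨⟨u, hu, hpu, hqu⟩, v, hv, hqv, hpv⟩ := h
  rcases le_total u v with h | h
  · exact hqu (hq u hu v hv h hqv)
  · exact hpv (hp v hv u hu h hpu)

theorem map_one_sub_restrict :
    (volume.restrict (Ioo (0 : ℝ) 1)).map (fun u => 1 - u) = volume.restrict (Ioo (0 : ℝ) 1) := by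
  have h := (Measure.measurePreserving_sub_left (volume : Measure ℝ) 1).restrict_preimage
    (measurableSet_Ioo (a := (0 : ℝ)) (b := 1))
  simpa using h.map_eq

theorem map_fst_coupling {ρ : Measure ℝ} {ξ η : ℝ → ℝ} (hξ : AEMeasurable ξ ρ)
    (hη : AEMeasurable η ρ) : (ρ.map fun u => (ξ u, η u)).map Prod.fst = ρ.map ξ := by
  rw [AEMeasurable.map_map_of_aemeasurable measurable_fst.aemeasurable (hξ.prodMk hη)]
  rfl

theorem map_snd_coupling {ρ : Measure ℝ} {ξ η : ℝ → ℝ} (hξ : AEMeasurable ξ ρ)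
    (hη : AEMeasurable η ρ) : (ρ.map fun u => (ξ u, η u)).map Prod.snd = ρ.map η := by
  rw [AEMeasurable.map_map_of_aemeasurable measurable_snd.aemeasurable (hξ.prodMk hη)]
  rfl

/-- For a supermodular cost `c` (i.e. `-c` satisfies the Monge condition), the roles of
the comonotonic and countermonotonic bounds are reversed: the countermonotonic integral
is a lower bound and the comonotonic integral is an upper bound on `E[c (X, Y)]`. -/
theorem expectation_bounds_supermodular
    (μ : Measure (ℝ × ℝ)) [IsProbabilityMeasure μ]
    (c : ℝ × ℝ → ℝ) (hc_meas : Measurable c)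
    (hSuper : ∀ x x' y y' : ℝ, x ≤ x' → y ≤ y' →
      c (x, y') + c (x', y) ≤ c (x', y') + c (x, y))
    (FX FY QX QY : ℝ → ℝ)
    (hFX : ∀ x, FX x = (μ {p : ℝ × ℝ | p.1 ≤ x}).toReal)
    (hFY : ∀ y, FY y = (μ {p : ℝ × ℝ | p.2 ≤ y}).toReal)
    (hQX : ∀ u, QX u = sInf {x : ℝ | u ≤ FX x})
    (hQY : ∀ u, QY u = sInf {y : ℝ | u ≤ FY y})
    (hint : Integrable c μ)
    (hint_co : IntegrableOn (fun u => c (QX u, QY u)) (Ioo (0:ℝ) 1) volume)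
    (hint_counter : IntegrableOn (fun u => c (QX u, QY (1 - u))) (Ioo (0:ℝ) 1) volume) :
    ∫ u in Ioo (0:ℝ) 1, c (QX u, QY (1 - u)) ≤ ∫ p, c p ∂μ ∧
      ∫ p, c p ∂μ ≤ ∫ u in Ioo (0:ℝ) 1, c (QX u, QY u) := by
  have : IsProbabilityMeasure (μ.map Prod.fst) :=
    Measure.isProbabilityMeasure_map measurable_fst.aemeasurable
  have : IsProbabilityMeasure (μ.map Prod.snd) :=
    Measure.isProbabilityMeasure_map measurable_snd.aemeasurable
  have hFX' : ∀ x, FX x = (μ.map Prod.fst (Iic x)).toReal := fun x => by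
    rw [hFX, Measure.map_apply measurable_fst measurableSet_Iic]
    rfl
  have hFY' : ∀ y, FY y = (μ.map Prod.snd (Iic y)).toReal := fun y => by
    rw [hFY, Measure.map_apply measurable_snd measurableSet_Iic]
    rfl
  have monoX : MonotoneOn QX (Ioo (0 : ℝ) 1) := quantile_monotoneOn _ FX QX hFX' hQX
  have monoY : MonotoneOn QY (Ioo (0 : ℝ) 1) := quantile_monotoneOn _ FY QY hFY' hQY
  have lawX := map_quantile_s2 _ FX QX hFX' hQX
  have lawY := map_quantile_s2 _ FY QY hFY' hQY
  set I : Set ℝ := Ioo (0 : ℝ) 1 with hI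
  have hflip : ∀ u ∈ I, 1 - u ∈ I := fun u hu => ⟨by linarith [hu.2], by linarith [hu.1]⟩
  have hhalf : (1 / 2 : ℝ) ∈ I := by constructor <;> norm_num
  have antiY : AntitoneOn (fun u => QY (1 - u)) I := fun u hu v hv huv =>
    monoY (hflip v hv) (hflip u hu) (by linarith)
  have aeX : AEMeasurable QX (volume.restrict I) :=
    aemeasurable_restrict_of_monotoneOn measurableSet_Ioo monoX
  have aeY : AEMeasurable QY (volume.restrict I) :=
    aemeasurable_restrict_of_monotoneOn measurableSet_Ioo monoY
  have aeY' : AEMeasurable (fun u => QY (1 - u)) (volume.restrict I) :=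
    aemeasurable_restrict_of_antitoneOn measurableSet_Ioo antiY
  have lawY' : (volume.restrict I).map (fun u => QY (1 - u)) = μ.map Prod.snd := by
    have hm : AEMeasurable (fun u : ℝ => 1 - u) (volume.restrict I) := by fun_prop
    have := AEMeasurable.map_map_of_aemeasurable (g := QY) (f := fun u : ℝ => 1 - u)
      (μ := volume.restrict I) (by rw [hI, map_one_sub_restrict]; exact aeY) hm
    rw [hI, map_one_sub_restrict, lawY] at this
    exact this.symm
  have hpair := aeX.prodMk aeY
  have hpair' := aeX.prodMk aeY'
  have hmain := expectation_bounds_of_couplings μ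
    ((volume.restrict I).map fun u => (QX u, QY u))
    ((volume.restrict I).map fun u => (QX u, QY (1 - u))) c hc_meas hSuper
    (QX (1 / 2)) (QY (1 / 2))
    ((map_fst_coupling aeX aeY).trans lawX) ((map_snd_coupling aeX aeY).trans lawY)
    ((map_fst_coupling aeX aeY').trans lawX) ((map_snd_coupling aeX aeY').trans lawY')
    (fun A B hA hB => prod_le_of_nested μ QX QY aeX aeY lawX lawY
      hA.ordConnected.measurableSet hB.ordConnected.measurableSet
      (nested_of_upward I _ _ (fun u hu v hv h => hA (monoX hu hv h))
        (fun u hu v hv h => hB (monoY hu hv h))))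
    (fun A B hA hB => prod_le_of_nested μ QX QY aeX aeY lawX lawY
      hA.ordConnected.measurableSet hB.ordConnected.measurableSet
      (nested_of_downward I _ _ (fun u hu v hv h => hA (monoX hu hv h))
        (fun u hu v hv h => hB (monoY hu hv h))))
    (fun A B hA hB => prod_le_of_nested μ QX (fun u => QY (1 - u)) aeX aeY' lawX lawY'
      hA.ordConnected.measurableSet hB.ordConnected.measurableSet
      (nested_of_upward I _ _ (fun u hu v hv h => hA (monoX hu hv h))
        (fun u hu v hv h => hB (antiY hu hv h))))
    (fun A B hA hB => prod_le_of_nested μ QX (fun u => QY (1 - u)) aeX aeY' lawX lawY'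
      hA.ordConnected.measurableSet hB.ordConnected.measurableSet
      (nested_of_downward I _ _ (fun u hu v hv h => hA (monoX hu hv h))
        (fun u hu v hv h => hB (antiY hu hv h))))
    (by
      rw [ae_map_iff hpair (by measurability)]
      filter_upwards [ae_restrict_mem measurableSet_Ioo] with u hu
      rcases le_total (1 / 2) u with h | h
      · exact Or.inl ⟨monoX hhalf hu h, monoY hhalf hu h⟩
      · exact Or.inr ⟨monoX hu hhalf h, monoY hu hhalf h⟩)
    (by
      rw [ae_map_iff hpair' (by measurability)]
      filter_upwards [ae_restrict_mem measurableSet_Ioo] with u hu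
      rcases le_total (1 / 2) u with h | h
      · exact Or.inl ⟨monoX hhalf hu h, monoY (hflip u hu) hhalf (by linarith)⟩
      · exact Or.inr ⟨monoX hu hhalf h, monoY hhalf (hflip u hu) (by linarith)⟩)
    hint
    ((integrable_map_measure hc_meas.aestronglyMeasurable hpair).2 hint_co)
    ((integrable_map_measure hc_meas.aestronglyMeasurable hpair').2 hint_counter)
  rwa [integral_map hpair hc_meas.aestronglyMeasurable,
    integral_map hpair' hc_meas.aestronglyMeasurable] at hmain
end

section
/- (Topkis's characterization) Let c : ℝ × ℝ → ℝ be such that for every fixed y the partial derivative ∂c/∂x(x, y) exists for all x, and for every fixed x the function y ↦ ∂c/∂x(x, y) is differentiable with ∂²c/(∂x∂y)(x, y) ≤ 0 for all x, y ∈ ℝ. Then c satisfies the Monge condition: c(x', y') + c(x, y) ≤ c(x, y') + c(x', y) for all x ≤ x' and y ≤ y'. -/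
/-- Topkis's characterization theorem: if `c : ℝ → ℝ → ℝ` has a partial derivative
`cx = ∂c/∂x` everywhere, and for each fixed `x` the function `y ↦ cx x y` is
differentiable with derivative `cxy x y = ∂²c/(∂x∂y)(x, y) ≤ 0` everywhere, then `c`
satisfies the Monge condition (is submodular). -/
theorem topkis_monge_condition
    (c cx cxy : ℝ → ℝ → ℝ)
    (hcx : ∀ x y : ℝ, HasDerivAt (fun t => c t y) (cx x y) x)
    (hcxy : ∀ x y : ℝ, HasDerivAt (fun t => cx x t) (cxy x y) y)
    (hneg : ∀ x y : ℝ, cxy x y ≤ 0) :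
    ∀ x x' y y' : ℝ, x ≤ x' → y ≤ y' →
      c x' y' + c x y ≤ c x y' + c x' y := by
  intro x x' y y' hx hy
  have anti_cx : ∀ t, cx t y' ≤ cx t y := fun t =>
    antitone_of_hasDerivAt_nonpos (hcxy t) (hneg t) hy
  -- The difference `c(·, y') - c(·, y)` has derivative `cx(·, y') - cx(·, y) ≤ 0`.
  have anti_diff : Antitone (fun t => c t y' - c t y) :=
    antitone_of_hasDerivAt_nonpos (fun t => (hcx t y').fun_sub (hcx t y))
      (fun t => sub_nonpos.2 (anti_cx t))
  have h : c x' y' - c x' y ≤ c x y' - c x y := anti_diff hx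
  linarith
end

section
/- Let s > 0. The instantaneous secret-key rate c(x, y) = log((1 + x + y)/(1 + y)), defined for x ≥ 0 and y ≥ 0, satisfies the Monge condition: for all 0 ≤ x ≤ x' and 0 ≤ y ≤ y', it holds that log((1 + x' + y')/(1 + y')) + log((1 + x + y)/(1 + y)) ≤ log((1 + x + y')/(1 + y')) + log((1 + x' + y)/(1 + y)). -/
/-- The instantaneous secret-key rate `c(x, y) = log((1 + x + y)/(1 + y))` satisfies
the Monge condition on `[0, ∞)²`. -/
theorem secret_key_rate_monge_condition (s : ℝ) (hs : 0 < s) :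
    ∀ x x' y y' : ℝ, 0 ≤ x → x ≤ x' → 0 ≤ y → y ≤ y' →
      Real.log ((1 + x' + y') / (1 + y')) + Real.log ((1 + x + y) / (1 + y)) ≤
        Real.log ((1 + x + y') / (1 + y')) + Real.log ((1 + x' + y) / (1 + y)) := by
  intro x x' y y' hx hxx hy hyy
  have hx' : 0 ≤ x' := hx.trans hxx
  have hy' : 0 ≤ y' := hy.trans hyy
  -- Both products of quotients have denominator `(1 + y') * (1 + y)`, and the numerators
  -- differ by `(x' - x) * (y' - y) ≥ 0`.
  rw [← Real.log_mul (by positivity) (by positivity),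
    ← Real.log_mul (by positivity) (by positivity), div_mul_div_comm, div_mul_div_comm]
  apply Real.log_le_log (by positivity)
  apply div_le_div_of_nonneg_right _ (by positivity)
  nlinarith [mul_nonneg (sub_nonneg.2 hxx) (sub_nonneg.2 hyy)]
end
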